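/- arXiv:1810.08022 — 2 statements merged into one kernel-verified Lean document; each statement's English description precedes it below -/
import Mathlib

section
/- Let q ∈ ℂ be a primitive third root of unity and set q^{1/2} := −q², so that (q^{1/2})² = q. For every integer k and every positive integer n the following identities hold in ℂ[x]: (1) d_{n,6k+1}(x,q) = 2^{⌊n/2⌋⌊(n+1)/2⌋} · [∏_{i=1}^{⌊(n+1)/2⌋}(i−1)!/(n−i)!] · ∏_{i≥0} (x/2+3i+1)_{⌊(n−4i)/2⌋}·(x/2+3i+3)_{⌊(n−4i−3)/2⌋} · ∏_{i≥0} (x/2+n−i+1/2)_{⌊(n−4i−1)/2⌋}·(x/2+n−i−1/2)_{⌊(n−4i−2)/2⌋}; (2) d_{n,6k+2}(x,q) = 2^{⌊n/2⌋⌊(n+1)/2⌋}·3^{−⌊n/2⌋}·(1−q)^n · [∏_{i=1}^{⌊(n+1)/2⌋}(i−1)!/(n−i)!] · ∏_{i≥0} (x/2+n−i)_{⌊(n−4i)/2⌋}·(x/2+n−i)_{⌊(n−4i−3)/2⌋} · ∏_{i≥0} (x/2+3i+3/2)_{⌊(n−4i−1)/2⌋}·(x/2+3i+5/2)_{⌊(n−4i−2)/2⌋};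 (3) d_{n,6k+3}(x,q) = (−q)^n·2^{⌊(n+1)/2⌋⌊(n+2)/2⌋−⌊n/2⌋} · [∏_{i=1}^{⌊(n+1)/2⌋}(i−1)!/(n−i)!] · ∏_{i≥0} (x/2+3i+2)_{⌊(n−4i−1)/2⌋}·(x/2+3i+2)_{⌊(n−4i−2)/2⌋} · ∏_{i≥0} (x/2+2⌊n/2⌋−i+1/2)_{⌊(n−4i)/2⌋}·(x/2+2⌊(n−1)/2⌋−i+3/2)_{⌊(n−4i−3)/2⌋}; (4) d_{n,6k+4}(x,q) = (q^{1/2})^{−n}·d_{n,6k+2}(x,q); (5) d_{n,6k+5}(x,q) = q^{−n}·d_{n,6k+1}(x,q); (6) d_{2n+1,6k}(x,q) = 0; (7) d_{2n,6k}(x,q) = (q^{1/2})^{n}·2^{n²}·[∏_{i=1}^{n}(i−1)!/(2n−i)!] · ∏_{i≥0} (x/2+3i+1/2)_{n−2i}·(x/2+3i+7/2)_{n−2(i+1)}·((x/2+2n−i)_{n−2i−1})². All products over i ≥ 0 are finite since Pochhammer symbols with non-positive index equal 1. -/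
open Polynomial Finset

noncomputable section

/-- The polynomial binomial coefficient binom(y, m) = y(y-1)⋯(y-m+1)/m! over a field F. -/
noncomputable def binomP (F : Type*) [Field F] (y : Polynomial F) (m : ℕ) : Polynomial F :=
  Polynomial.C ((m.factorial : F))⁻¹ * ∏ t ∈ Finset.range m, (y - (t : Polynomial F))

/-- a_m(q) for a numeric value q in a field: a_m = ∑_{l=0}^{m-1}(-q)^l for m > 0, a_0 = 0,
a_m = -∑_{l=1}^{-m}(-q)^{-l} for m < 0. -/
noncomputable def aF (F : Type*) [Field F] (q : F) (m : ℤ) : F :=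
  if 0 < m then ∑ l ∈ Finset.range m.toNat, (-q) ^ l
  else -∑ l ∈ Finset.range (-m).toNat, (-q) ^ (-(l + 1 : ℤ))

/-- d_{n,k}(x,q) ∈ F[x] for a numeric value q:
the determinant of the matrix with (1-based) (i,j) entry binom(x+i+j-2, j-1)·a_{j-i+k}(q). -/
noncomputable def dF (F : Type*) [Field F] (n : ℕ) (k : ℤ) (q : F) : Polynomial F :=
  Matrix.det (Matrix.of fun i j : Fin n =>
    binomP F (Polynomial.X + ((i : ℕ) : Polynomial F) + ((j : ℕ) : Polynomial F)) (j : ℕ) *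
      Polynomial.C (aF F q ((j : ℤ) - (i : ℤ) + k)))

/-- The Pochhammer symbol (y)_m = y(y+1)⋯(y+m-1) for m > 0, and (y)_m = 1 for m ≤ 0. -/
noncomputable def poch (y : Polynomial ℂ) (m : ℤ) : Polynomial ℂ :=
  ∏ t ∈ Finset.range m.toNat, (y + (t : Polynomial ℂ))

/-- x/2 as a polynomial. -/
noncomputable def halfX : Polynomial ℂ := Polynomial.C (2⁻¹ : ℂ) * Polynomial.X

/-- ∏_{i=1}^{⌊(n+1)/2⌋}(i-1)!/(n-i)!. -/
noncomputable def prodFact1 (n : ℕ) : ℂ :=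
  ∏ i ∈ Finset.range ((n + 1) / 2), (i.factorial : ℂ) / ((n - 1 - i).factorial : ℂ)

/-!
The determinants satisfy a condensation recurrence: up to row and column factors of the binomial
coefficients, the connected minors of `D_{n,k}(x, q)` are again determinants of this family, so the
Desnanot-Jacobi identity expresses `d_{n+2,k}(x) d_{n,k}(x+2)` through
`d_{n+1,k}(x) d_{n+1,k}(x+2)` and `d_{n+1,k-1}(x+1) d_{n+1,k+1}(x+1)`.

For a primitive third root of unity `q`, the sequence `a_m(q)` has period `6`, and
`a_{-m}(q) = -(-q)^(-m) a_m(q)` relates `d_{n,-k}` to `d_{n,k}` once the rows and columns are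
rescaled so that the binomial coefficients become a symmetric Hankel matrix. Hence the recurrence
closes up on `k = 0, 1, 2, 3`. The product formulas satisfy the same recurrence: they are products
of the towers `(y)_m (y + s)_{m-2} (y + 2 * s)_{m-4} ⋯` with `s = 3` and `s = -1`, and
consecutive towers differ by a single rising factorial, so every instance reduces to an identity
between linear factors.

Solving the recurrence for `d_{n+2,k}` requires dividing by `d_{n,k}(x+2)`. This is legitimate at
non-integral points `x`, where no linear factor of the product formulas vanishes, and there are
infinitely many of these.
-/

section Condensation

variable {R m p : Type*} [CommRing R] [Fintype m] [DecidableEq m] [Fintype p] [DecidableEq p]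

lemma det_mul_det_adjugate_toBlocks₂₂ (M : Matrix (m ⊕ p) (m ⊕ p) R) :
    M.det * M.adjugate.toBlocks₂₂.det = M.toBlocks₁₁.det * M.det ^ Fintype.card p := by
  have h : M * Matrix.fromBlocks 1 M.adjugate.toBlocks₁₂ 0 M.adjugate.toBlocks₂₂ =
      Matrix.fromBlocks M.toBlocks₁₁ 0 M.toBlocks₂₁ (M.det • 1) := by
    have hadj := M.mul_adjugate
    rw [← M.adjugate.fromBlocks_toBlocks, ← Matrix.fromBlocks_one, Matrix.fromBlocks_smul] at hadj
    nth_rw 1 [← M.fromBlocks_toBlocks] at hadj ⊢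
    rw [Matrix.fromBlocks_multiply, Matrix.fromBlocks_inj] at hadj
    rw [Matrix.fromBlocks_multiply, hadj.2.1, hadj.2.2.2]
    simp
  have hdet := congrArg Matrix.det h
  rwa [Matrix.det_mul, Matrix.det_fromBlocks_zero₂₁, Matrix.det_fromBlocks_zero₁₂, Matrix.det_one,
    one_mul, Matrix.det_smul, Matrix.det_one, mul_one] at hdet

theorem det_adjugate_toBlocks₂₂ [Nonempty p] (M : Matrix (m ⊕ p) (m ⊕ p) R) :
    M.adjugate.toBlocks₂₂.det = M.toBlocks₁₁.det * M.det ^ (Fintype.card p - 1) := by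
  let A : Matrix (m ⊕ p) (m ⊕ p) (MvPolynomial ((m ⊕ p) × (m ⊕ p)) ℤ) := Matrix.mvPolynomialX _ _ _
  have hA : A.adjugate.toBlocks₂₂.det = A.toBlocks₁₁.det * A.det ^ (Fintype.card p - 1) := by
    apply mul_left_cancel₀ (Matrix.det_mvPolynomialX_ne_zero (m ⊕ p) ℤ)
    rw [det_mul_det_adjugate_toBlocks₂₂, mul_left_comm, mul_pow_sub_one Fintype.card_ne_zero]
  let f := MvPolynomial.aeval (R := ℤ) fun ij : (m ⊕ p) × (m ⊕ p) => M ij.1 ij.2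
  have hM : f.mapMatrix A = M := Matrix.mvPolynomialX_mapMatrix_aeval ℤ M
  have := congrArg f hA
  rw [map_mul, map_pow, AlgHom.map_det, AlgHom.map_det, AlgHom.map_det, hM] at this
  have h11 : f.mapMatrix A.toBlocks₁₁ = M.toBlocks₁₁ := by rw [← hM]; rfl
  have h22 : f.mapMatrix A.adjugate.toBlocks₂₂ = M.adjugate.toBlocks₂₂ := by
    rw [← hM, ← AlgHom.map_adjugate]; rfl
  rwa [h11, h22] at this

/-- The splitting of the indices `0, …, n + 1` into interior ones and the two ends. -/
def interiorSumEnds (n : ℕ) : Fin n ⊕ Fin 2 ≃ Fin (n + 2) :=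
  Equiv.ofBijective (Sum.elim (fun i => i.succ.castSucc) ![0, Fin.last (n + 1)]) <| by
    rw [Fintype.bijective_iff_injective_and_card]
    refine ⟨Function.Injective.sumElim ?_ ?_ ?_, by simp⟩
    · exact (Fin.castSucc_injective _).comp (Fin.succ_injective _)
    · intro a b; fin_cases a <;> fin_cases b <;> simp [Fin.ext_iff]
    · intro a b; fin_cases b <;> simp [Fin.ext_iff]; omega

theorem desnanot_jacobi {n : ℕ} (M : Matrix (Fin (n + 2)) (Fin (n + 2)) R) :
    M.det * (M.submatrix (fun i : Fin n => i.succ.castSucc) fun j => j.succ.castSucc).det =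
      (M.submatrix Fin.castSucc Fin.castSucc).det * (M.submatrix Fin.succ Fin.succ).det -
        (M.submatrix Fin.succ Fin.castSucc).det * (M.submatrix Fin.castSucc Fin.succ).det := by
  have h := det_adjugate_toBlocks₂₂ (M.submatrix (interiorSumEnds n) (interiorSumEnds n))
  have hint : (M.submatrix (interiorSumEnds n) (interiorSumEnds n)).toBlocks₁₁ =
      M.submatrix (fun i : Fin n => i.succ.castSucc) fun j => j.succ.castSucc := rfl
  have h0 : interiorSumEnds n (Sum.inr 0) = 0 := rfl
  have h1 : interiorSumEnds n (Sum.inr 1) = Fin.last (n + 1) := rfl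
  rw [Matrix.adjugate_submatrix_equiv_self, Matrix.det_submatrix_equiv_self, hint,
    Matrix.det_fin_two, Fintype.card_fin, pow_one] at h
  simp only [Matrix.toBlocks₂₂, Matrix.of_apply, Matrix.submatrix_apply, h0, h1,
    Matrix.adjugate_fin_succ_eq_det_submatrix, Fin.succAbove_zero, Fin.succAbove_last] at h
  have hsign : (-1 : R) ^ (n + 1) * (-1) ^ (n + 1) = 1 := by rw [← mul_pow]; simp
  simp only [Fin.val_zero, Fin.val_last, add_zero, zero_add, pow_zero, pow_add] at h hsign
  linear_combination -h + ((M.submatrix Fin.castSucc Fin.castSucc).det *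
    (M.submatrix Fin.succ Fin.succ).det - (M.submatrix Fin.succ Fin.castSucc).det *
      (M.submatrix Fin.castSucc Fin.succ).det) * hsign

end Condensation

section RisingFactorial

variable {R : Type*} [CommRing R]

/-- The rising factorial `y (y + 1) ⋯ (y + m - 1)`, equal to `1` for `m ≤ 0`; over `ℂ[X]` it is
`poch`. -/
def risingFact (y : R) (m : ℤ) : R :=
  ∏ t ∈ range m.toNat, (y + t)

lemma risingFact_of_nonpos (y : R) {m : ℤ} (hm : m ≤ 0) : risingFact y m = 1 := by
  rw [risingFact, Int.toNat_of_nonpos hm, prod_range_zero]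

lemma risingFact_add (y : R) {m l : ℤ} (hm : 0 ≤ m) (hl : 0 ≤ l) :
    risingFact y (m + l) = risingFact y m * risingFact (y + m) l := by
  lift m to ℕ using hm
  lift l to ℕ using hl
  rw [risingFact, ← Nat.cast_add, Int.toNat_natCast, prod_range_add]
  simp [risingFact, add_assoc]

lemma risingFact_one (y : R) : risingFact y 1 = y := by
  simp [risingFact]

lemma risingFact_add_one (y : R) {m : ℤ} (hm : 0 ≤ m) :
    risingFact y (m + 1) = risingFact y m * (y + m) := by
  rw [risingFact_add y hm zero_le_one, risingFact_one]

lemma risingFact_add_one' (y : R) {m : ℤ} (hm : 0 ≤ m) :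
    risingFact y (m + 1) = y * risingFact (y + 1) m := by
  rw [add_comm, risingFact_add y zero_le_one hm, risingFact_one, Int.cast_one]

end RisingFactorial

section Determinant

variable {F : Type*} [Field F]

/-- The value `binom(x + i + j, j)` of the binomial coefficient in the `(i, j)` entry of
`D_{n,k}(x, q)`, with rows and columns numbered from `0`. -/
def binVal (x : F) (i j : ℕ) : F :=
  risingFact (x + i + 1) j / j.factorial

/-- The value of `d_{n,k}(x, q)` at a scalar `x`. -/
def dVal (q : F) (n : ℕ) (k : ℤ) (x : F) : F :=
  Matrix.det (Matrix.of fun i j : Fin n => binVal x i j * aF F q ((j : ℤ) - (i : ℤ) + k))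

lemma eval_binomP (x : F) (i j : ℕ) :
    (binomP F (X + (i : F[X]) + (j : F[X])) j).eval x = binVal x i j := by
  rw [binomP, binVal, risingFact, Int.toNat_natCast, div_eq_inv_mul, eval_mul, eval_C, eval_prod,
    ← prod_range_reflect]
  congr 1
  refine prod_congr rfl fun t ht => ?_
  rw [Nat.sub_sub, Nat.cast_sub (by have := mem_range.1 ht; omega)]
  simp
  ring

lemma eval_dF (q : F) (n : ℕ) (k : ℤ) (x : F) : (dF F n k q).eval x = dVal q n k x := by
  rw [dF, dVal, ← coe_evalRingHom, RingHom.map_det]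
  congr 1
  ext i j
  simp only [RingHom.mapMatrix_apply, Matrix.map_apply, Matrix.of_apply, coe_evalRingHom, eval_mul,
    eval_C, eval_binomP]

lemma binVal_succ_left (x : F) (i j : ℕ) : binVal x (i + 1) j = binVal (x + 1) i j := by
  rw [binVal, binVal, Nat.cast_succ, add_right_comm x 1, ← add_assoc]

lemma dVal_zero (q : F) (k : ℤ) (x : F) : dVal q 0 k x = 1 :=
  Matrix.det_fin_zero

lemma dVal_one (q : F) (k : ℤ) (x : F) : dVal q 1 k x = aF F q k := by
  simp [dVal, binVal, risingFact]

/-- A scalar outside `ℤ`; the determinants are evaluated at such points, where no linear factor of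
the product formulas vanishes. -/
def IsGeneric (x : F) : Prop :=
  ∀ a : ℤ, x ≠ a

lemma IsGeneric.add_intCast {x : F} (hx : IsGeneric x) (a : ℤ) : IsGeneric (x + a) :=
  fun b h => hx (b - a) (by rw [Int.cast_sub, ← h, add_sub_cancel_right])

lemma IsGeneric.add_intCast_ne_zero {x : F} (hx : IsGeneric x) (a : ℤ) : x + a ≠ 0 :=
  fun h => hx (-a) (by rw [Int.cast_neg, eq_neg_of_add_eq_zero_left h])

lemma IsGeneric.of_two_mul_eq {y z : F} (hy : IsGeneric (2 * y)) (b : ℤ) (hz : 2 * z = 2 * y + b) :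
    IsGeneric z :=
  fun a ha => hy.add_intCast b (2 * a) (by rw [← hz, ha]; push_cast; rfl)

lemma IsGeneric.two_mul_add_one {y : F} (hy : IsGeneric (2 * y)) : IsGeneric (2 * (y + 1)) := by
  simpa [mul_add] using hy.add_intCast 2

lemma IsGeneric.risingFact_ne_zero {x : F} (hx : IsGeneric x) (m : ℤ) : risingFact x m ≠ 0 :=
  prod_ne_zero_iff.2 fun t _ => by exact_mod_cast hx.add_intCast_ne_zero t

variable [CharZero F]

lemma binVal_ne_zero {x : F} (hx : IsGeneric x) (i j : ℕ) : binVal x i j ≠ 0 := by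
  refine div_ne_zero ?_ (Nat.cast_ne_zero.2 j.factorial_ne_zero)
  simpa [add_assoc] using (hx.add_intCast (i + 1)).risingFact_ne_zero j

lemma binVal_succ_right (x : F) (i j : ℕ) :
    binVal x i (j + 1) = (x + i + j + 1) / (j + 1) * binVal x i j := by
  rw [binVal, binVal, Nat.factorial_succ, Nat.cast_succ, Nat.cast_mul,
    risingFact_add_one _ (Int.natCast_nonneg j), Nat.cast_succ, Int.cast_natCast]
  field_simp
  ring

lemma binVal_succ_right' (x : F) (i j : ℕ) :
    binVal x i (j + 1) = (x + i + 1) / (j + 1) * binVal (x + 1) i j := by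
  rw [binVal, binVal, Nat.factorial_succ, Nat.cast_succ, Nat.cast_mul,
    risingFact_add_one' _ (Int.natCast_nonneg j), Nat.cast_succ, add_right_comm x 1]
  field_simp

lemma binVal_zero_eq_prod (x : F) (n : ℕ) :
    binVal x 0 n = (∏ i : Fin n, (x + (i : ℕ) + 1)) * ∏ j : Fin n, ((j : ℕ) + 1 : F)⁻¹ := by
  rw [Fin.prod_univ_eq_prod_range fun i => x + (i : F) + 1,
    Fin.prod_univ_eq_prod_range fun j => ((j : F) + 1)⁻¹, prod_inv_distrib, ← div_eq_mul_inv]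
  rw [binVal, risingFact, ← prod_range_add_one_eq_factorial, Int.toNat_natCast, Nat.cast_prod]
  simp [add_right_comm]

lemma det_binVal_succ_right (q : F) (n : ℕ) (k : ℤ) (x : F) :
    Matrix.det (Matrix.of fun i j : Fin n =>
        binVal x i (j + 1) * aF F q ((j : ℤ) - (i : ℤ) + k)) =
      binVal x 0 n * dVal q n k (x + 1) := by
  rw [binVal_zero_eq_prod, dVal, mul_assoc, ← Matrix.det_mul_row, ← Matrix.det_mul_column]
  congr 1
  ext i j
  simp only [Matrix.of_apply, binVal_succ_right']
  ring

lemma dVal_condensation_binVal (q : F) (n : ℕ) (k : ℤ) (x : F) :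
    dVal q (n + 2) k x * (binVal (x + 1) 0 n * dVal q n k (x + 2)) =
      dVal q (n + 1) k x * (binVal (x + 1) 0 (n + 1) * dVal q (n + 1) k (x + 2)) -
        dVal q (n + 1) (k - 1) (x + 1) *
          (binVal x 0 (n + 1) * dVal q (n + 1) (k + 1) (x + 1)) := by
  rw [show x + 2 = x + 1 + 1 by ring]
  simp only [← det_binVal_succ_right]
  have shift (a b : ℤ) : a + 1 - (b + 1) + k = a - b + k := by ring
  have shift_left (a b : ℤ) : a - (b + 1) + k = a - b + (k - 1) := by ring
  have shift_right (a b : ℤ) : a + 1 - b + k = a - b + (k + 1) := by ring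
  have h := desnanot_jacobi (Matrix.of fun i j : Fin (n + 2) =>
    binVal x i j * aF F q ((j : ℤ) - (i : ℤ) + k))
  simpa only [dVal, Matrix.submatrix, Matrix.of_apply, Fin.val_succ, Fin.val_castSucc,
    Nat.cast_succ, binVal_succ_left, shift, shift_left, shift_right] using h

theorem dVal_condensation (q : F) (n : ℕ) (k : ℤ) {x : F} (hx : IsGeneric x) :
    (n + 1) * (dVal q (n + 2) k x * dVal q n k (x + 2)) =
      (x + n + 2) * (dVal q (n + 1) k x * dVal q (n + 1) k (x + 2)) -
        (x + 1) * (dVal q (n + 1) (k - 1) (x + 1) * dVal q (n + 1) (k + 1) (x + 1)) := by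
  have hscale : binVal (x + 1) 0 n ≠ 0 := by
    simpa using binVal_ne_zero (hx.add_intCast 1) 0 n
  have h := dVal_condensation_binVal q n k x
  rw [binVal_succ_right, binVal_succ_right'] at h
  field_simp at h
  push_cast at h
  linear_combination h

end Determinant

section Symmetry

variable {F : Type*} [Field F]

lemma one_add_mul_aF {q : F} (hq : q ≠ 0) (m : ℤ) : (1 + q) * aF F q m = 1 - (-q) ^ m := by
  rw [aF]
  split_ifs with hm
  · lift m to ℕ using hm.le
    rw [Int.toNat_natCast, zpow_natCast, ← mul_neg_geom_sum, sub_neg_eq_add]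
  · obtain ⟨N, rfl⟩ := Int.exists_eq_neg_ofNat (not_lt.1 hm)
    have hterm (l : ℕ) : (-q) ^ (-(l + 1 : ℤ)) = (-q)⁻¹ * (-q)⁻¹ ^ l := by
      rw [zpow_neg, ← inv_zpow, ← pow_succ']
      exact_mod_cast rfl
    rw [neg_neg, Int.toNat_natCast, zpow_neg, zpow_natCast, ← inv_pow, ← mul_neg_geom_sum]
    simp only [hterm, ← mul_sum]
    field_simp
    ring

lemma aF_eq_div {q : F} (hq : q ≠ 0) (hq1 : 1 + q ≠ 0) (m : ℤ) :
    aF F q m = (1 - (-q) ^ m) / (1 + q) := by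
  rw [eq_div_iff hq1, mul_comm, one_add_mul_aF hq]

lemma aF_neg {q : F} (hq : q ≠ 0) (hq1 : 1 + q ≠ 0) (m : ℤ) :
    aF F q (-m) = -(-q) ^ (-m) * aF F q m := by
  have hinv : (-q) ^ (-m) * (-q) ^ m = 1 := by rw [← zpow_add₀ (neg_ne_zero.2 hq)]; simp
  rw [aF_eq_div hq hq1, aF_eq_div hq hq1, mul_div_assoc', div_left_inj' hq1]
  linear_combination -hinv

/-- The matrix `D_{n,k}(x, q)` rescaled to a Hankel matrix multiplied entrywise by a Toeplitz
matrix. -/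
def hankelToeplitz (q : F) (n : ℕ) (k : ℤ) (x : F) : Matrix (Fin n) (Fin n) F :=
  Matrix.of fun i j => risingFact (x + 1) ((i : ℤ) + j) * aF F q ((j : ℤ) - i + k)

lemma det_hankelToeplitz_neg {q : F} (hq : q ≠ 0) (hq1 : 1 + q ≠ 0) (n : ℕ) (k : ℤ) (x : F) :
    (hankelToeplitz q n k x).det = (-(-q) ^ k) ^ n * (hankelToeplitz q n (-k) x).det := by
  have hq0 : -q ≠ 0 := neg_ne_zero.2 hq
  have hdiag : (-(-q) ^ k) ^ n =
      (∏ i : Fin n, -(-q) ^ k * (-q) ^ (i : ℕ)) * ∏ j : Fin n, ((-q) ^ (j : ℕ))⁻¹ := by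
    rw [← prod_mul_distrib]
    simp [mul_inv_cancel_right₀ (pow_ne_zero _ hq0)]
  rw [← Matrix.det_transpose, hdiag, mul_assoc, ← Matrix.det_mul_row, ← Matrix.det_mul_column]
  congr 1
  ext i j
  simp only [hankelToeplitz, Matrix.transpose_apply, Matrix.of_apply]
  rw [show (i : ℤ) - j + k = -((j : ℤ) - i + -k) by ring, aF_neg hq hq1,
    show -((j : ℤ) - i + -k) = k + i + -j by ring, zpow_add₀ hq0, zpow_add₀ hq0, zpow_neg,
    zpow_natCast, zpow_natCast, add_comm (j : ℤ)]
  ring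

variable [CharZero F]

lemma binVal_mul_eq_risingFact_add (x : F) (i j : ℕ) :
    risingFact (x + 1) i * (j.factorial * binVal x i j) = risingFact (x + 1) ((i : ℤ) + j) := by
  rw [risingFact_add _ (Int.natCast_nonneg i) (Int.natCast_nonneg j), binVal,
    mul_div_cancel₀ _ (Nat.cast_ne_zero.2 j.factorial_ne_zero), Int.cast_natCast,
    add_right_comm x 1]

lemma det_hankelToeplitz (q : F) (n : ℕ) (k : ℤ) (x : F) :
    (hankelToeplitz q n k x).det =
      (∏ i : Fin n, risingFact (x + 1) (i : ℕ)) *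
        ((∏ j : Fin n, ((j : ℕ).factorial : F)) * dVal q n k x) := by
  rw [dVal, ← Matrix.det_mul_row, ← Matrix.det_mul_column]
  congr 1
  ext i j
  simp only [hankelToeplitz, Matrix.of_apply, ← binVal_mul_eq_risingFact_add]
  ring

theorem dVal_neg {q : F} (hq : q ≠ 0) (hq1 : 1 + q ≠ 0) (n : ℕ) (k : ℤ) {x : F}
    (hx : IsGeneric x) : dVal q n k x = (-(-q) ^ k) ^ n * dVal q n (-k) x := by
  have hrow : ∏ i : Fin n, risingFact (x + 1) (i : ℕ) ≠ 0 :=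
    prod_ne_zero_iff.2 fun i _ => by
      simpa using (hx.add_intCast 1).risingFact_ne_zero (i : ℕ)
  have hcol : ∏ j : Fin n, ((j : ℕ).factorial : F) ≠ 0 :=
    prod_ne_zero_iff.2 fun j _ => Nat.cast_ne_zero.2 (j : ℕ).factorial_ne_zero
  have h := det_hankelToeplitz_neg hq hq1 n k x
  rw [det_hankelToeplitz, det_hankelToeplitz] at h
  apply mul_left_cancel₀ (mul_ne_zero hrow hcol)
  linear_combination h

end Symmetry

section ThirdRootOfUnity

variable {F : Type*} [Field F] {q : F}

lemma sq_add_self_add_one_eq_zero (hq : IsPrimitiveRoot q 3) : q ^ 2 + q + 1 = 0 := by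
  have h := hq.geom_sum_eq_zero (by norm_num)
  simp only [sum_range_succ, range_zero, sum_empty, pow_zero, pow_one] at h
  linear_combination h

lemma one_add_ne_zero_of_isPrimitiveRoot_three (hq : IsPrimitiveRoot q 3) : 1 + q ≠ 0 := fun h =>
  one_ne_zero (α := F) (by linear_combination sq_add_self_add_one_eq_zero hq - q * h)

lemma neg_zpow_six_mul (hq : IsPrimitiveRoot q 3) (k : ℤ) : (-q) ^ (6 * k) = 1 := by
  have h : (-q) ^ (6 : ℤ) = 1 := by
    rw [show (6 : ℤ) = (6 : ℕ) from rfl, zpow_natCast]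
    linear_combination (q ^ 3 + 1) * hq.pow_eq_one
  rw [zpow_mul, h, one_zpow]

lemma aF_add_six_mul (hq : IsPrimitiveRoot q 3) (m k : ℤ) : aF F q (m + 6 * k) = aF F q m := by
  have hq0 : q ≠ 0 := hq.ne_zero (by norm_num)
  have hq1 := one_add_ne_zero_of_isPrimitiveRoot_three hq
  rw [aF_eq_div hq0 hq1, aF_eq_div hq0 hq1, zpow_add₀ (neg_ne_zero.2 hq0), neg_zpow_six_mul hq,
    mul_one]

lemma dF_six_mul_add (hq : IsPrimitiveRoot q 3) (n : ℕ) (k l : ℤ) :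
    dF F n (6 * k + l) q = dF F n l q := by
  simp only [dF, add_comm (6 * k) l, ← add_assoc, aF_add_six_mul hq]

variable [CharZero F] {x : F}

lemma dVal_six_sub (hq : IsPrimitiveRoot q 3) (n : ℕ) (k : ℤ) (hx : IsGeneric x) :
    dVal q n (6 - k) x = (-(-q) ^ (-k)) ^ n * dVal q n k x := by
  have hq0 : q ≠ 0 := hq.ne_zero (by norm_num)
  rw [dVal_neg hq0 (one_add_ne_zero_of_isPrimitiveRoot_three hq) n (6 - k) hx, neg_sub,
    sub_eq_add_neg, zpow_add₀ (neg_ne_zero.2 hq0), ← eval_dF q n (k - 6),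
    show k - 6 = 6 * (-1) + k by ring, dF_six_mul_add hq, eval_dF,
    show (6 : ℤ) = 6 * 1 from rfl, neg_zpow_six_mul hq, one_mul]

lemma dVal_four (hq : IsPrimitiveRoot q 3) (n : ℕ) (hx : IsGeneric x) :
    dVal q n 4 x = (-q) ^ n * dVal q n 2 x := by
  have h : -(-q) ^ (-2 : ℤ) = -q := by
    rw [show (-2 : ℤ) = -((2 : ℕ) : ℤ) from rfl, zpow_neg, zpow_natCast,
      inv_eq_of_mul_eq_one_right (by linear_combination hq.pow_eq_one)]
  rw [show (4 : ℤ) = 6 - 2 from rfl, dVal_six_sub hq n 2 hx, h]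

lemma dVal_five (hq : IsPrimitiveRoot q 3) (n : ℕ) (hx : IsGeneric x) :
    dVal q n 5 x = (q ^ 2) ^ n * dVal q n 1 x := by
  have h : -(-q) ^ (-1 : ℤ) = q ^ 2 := by
    rw [zpow_neg_one, inv_eq_of_mul_eq_one_right (b := -q ^ 2)
      (by linear_combination hq.pow_eq_one), neg_neg]
  rw [show (5 : ℤ) = 6 - 1 from rfl, dVal_six_sub hq n 1 hx, h]

lemma dVal_zero_odd (hq : IsPrimitiveRoot q 3) {n : ℕ} (hn : Odd n) (hx : IsGeneric x) :
    dVal q n 0 x = 0 := by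
  have h := dVal_neg (hq.ne_zero (by norm_num)) (one_add_ne_zero_of_isPrimitiveRoot_three hq) n 0 hx
  rw [zpow_zero, hn.neg_one_pow, neg_zero, neg_one_mul] at h
  exact self_eq_neg.1 h

end ThirdRootOfUnity

section Tower

variable {R : Type*} [CommRing R]

/-- The tower `(y)_m (y + s)_{m-2} (y + 2 * s)_{m-4} ⋯` of rising factorials; the product formulas
are products of such towers with steps `s = 3` and `s = -1`. -/
def tower (s : R) (m : ℤ) (y : R) : R :=
  ∏ i ∈ range m.toNat, risingFact (y + s * i) (m - 2 * i)

lemma tower_of_nonpos (s : R) {m : ℤ} (hm : m ≤ 0) (y : R) : tower s m y = 1 := by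
  rw [tower, Int.toNat_of_nonpos hm, prod_range_zero]

lemma tower_eq_prod_range (s : R) {m : ℤ} (y : R) {N : ℕ} (hN : m ≤ 2 * N) :
    tower s m y = ∏ i ∈ range N, risingFact (y + s * i) (m - 2 * i) := by
  have extend {a b : ℕ} (hab : a ≤ b) (ha : m ≤ 2 * a) :
      ∏ i ∈ range a, risingFact (y + s * i) (m - 2 * i) =
        ∏ i ∈ range b, risingFact (y + s * i) (m - 2 * i) :=
    prod_subset (range_mono hab) fun i _ hi =>
      risingFact_of_nonpos _ (by simp only [mem_range] at hi; omega)
  rcases le_total m.toNat N with h | h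
  · exact extend h (by omega)
  · exact (extend h hN).symm

lemma tower_peel (s : R) (m : ℤ) (y : R) :
    tower s m y = risingFact y m * tower s (m - 2) (y + s) := by
  rw [tower_eq_prod_range s y (N := m.toNat + 1) (by omega),
    tower_eq_prod_range s (y + s) (N := m.toNat) (by omega), prod_range_succ', mul_comm]
  congr 1
  · simp
  · refine prod_congr rfl fun i _ => ?_
    congr 1 <;> push_cast <;> ring

lemma tower_mul_tower_peel (s : R) {m : ℤ} (hm : 0 ≤ m) (y : R) :
    tower s (m + 1) y * tower s (m - 2) (y + s) =
      (y + m) * (tower s m y * tower s (m - 1) (y + s)) := by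
  rw [tower_peel s (m + 1), tower_peel s m, risingFact_add_one y hm,
    show m + 1 - 2 = m - 1 by ring]
  ring

lemma tower_mul_tower_peel' (s : R) {m : ℤ} (hm : 0 ≤ m) (y : R) :
    tower s (m + 1) y * tower s (m - 2) (y + s + 1) =
      y * (tower s m (y + 1) * tower s (m - 1) (y + s)) := by
  rw [tower_peel s (m + 1), tower_peel s m, risingFact_add_one' y hm,
    show m + 1 - 2 = m - 1 by ring, add_right_comm y 1]
  ring

lemma tower_three_add_one (m : ℤ) (y : R) :
    tower 3 (m + 1) y = tower 3 m y * risingFact (y + m) ((m + 2) / 2) := by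
  rcases lt_or_ge m 0 with hm | hm
  · rw [tower_of_nonpos _ hm.le, tower_of_nonpos _ (by omega), risingFact_of_nonpos _ (by omega),
      one_mul]
  · have ih := tower_three_add_one (m - 2) (y + 3)
    rw [tower_peel 3 (m + 1), tower_peel 3 m, risingFact_add_one y hm,
      show m + 1 - 2 = m - 2 + 1 by ring, ih, show (m + 2) / 2 = (m - 2 + 2) / 2 + 1 by omega,
      risingFact_add_one' _ (by omega),
      show y + 3 + ((m - 2 : ℤ) : R) = y + m + 1 by push_cast; ring]
    ring
termination_by (m + 2).toNat
decreasing_by omega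

lemma tower_neg_one_add_one (m : ℤ) (z : R) :
    tower (-1) (m + 1) z =
      tower (-1) m (z + 1) * risingFact (z - (m / 2 : ℤ)) ((m + 2) / 2) := by
  rcases lt_or_ge m 0 with hm | hm
  · rw [tower_of_nonpos _ hm.le, tower_of_nonpos _ (by omega), risingFact_of_nonpos _ (by omega),
      one_mul]
  · have ih := tower_neg_one_add_one (m - 2) (z + -1)
    rw [tower_peel (-1) (m + 1), tower_peel (-1) m, risingFact_add_one' z hm,
      show m + 1 - 2 = m - 2 + 1 by ring, ih, show (m + 2) / 2 = (m - 2 + 2) / 2 + 1 by omega,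
      risingFact_add_one _ (by omega),
      show m / 2 = (m - 2) / 2 + 1 by omega, show (m - 2 + 2) / 2 = (m - 2) / 2 + 1 by omega]
    push_cast
    ring_nf
termination_by (m + 2).toNat
decreasing_by omega

lemma tower_three_condense_even (j : ℤ) (y : R) :
    tower 3 (2 * j + 2) y * tower 3 (2 * j) (y + 1) =
      tower 3 (2 * j + 1) y * tower 3 (2 * j + 1) (y + 1) := by
  rw [show 2 * j + 2 = 2 * j + 1 + 1 by ring, tower_three_add_one (2 * j + 1) y,
    tower_three_add_one (2 * j) (y + 1), show (2 * j + 1 + 2) / 2 = (2 * j + 2) / 2 by omega]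
  push_cast
  ring_nf

lemma tower_three_condense_odd {j : ℤ} (hj : -1 ≤ j) (y : R) :
    tower 3 (2 * j + 3) y * tower 3 (2 * j + 1) (y + 1) =
      (y + 3 * j + 3) * (tower 3 (2 * j + 2) y * tower 3 (2 * j + 2) (y + 1)) := by
  rw [show 2 * j + 3 = 2 * j + 2 + 1 by ring, tower_three_add_one (2 * j + 2) y,
    show (2 * j + 2 + 2) / 2 = j + 1 + 1 by omega, risingFact_add_one _ (by omega),
    show 2 * j + 2 = 2 * j + 1 + 1 by ring, tower_three_add_one (2 * j + 1) (y + 1),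
    show (2 * j + 1 + 2) / 2 = j + 1 by omega]
  push_cast
  ring_nf

lemma tower_neg_one_condense_even (j : ℤ) (z : R) :
    tower (-1) (2 * j + 2) z * tower (-1) (2 * j) (z + 1) =
      tower (-1) (2 * j + 1) z * tower (-1) (2 * j + 1) (z + 1) := by
  rw [show 2 * j + 2 = 2 * j + 1 + 1 by ring, tower_neg_one_add_one (2 * j + 1) z,
    tower_neg_one_add_one (2 * j) z, show (2 * j + 1) / 2 = 2 * j / 2 by omega,
    show (2 * j + 1 + 2) / 2 = (2 * j + 2) / 2 by omega]
  ring

lemma tower_neg_one_condense_odd {j : ℤ} (hj : -1 ≤ j) (z : R) :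
    tower (-1) (2 * j + 3) z * tower (-1) (2 * j + 1) (z + 1) =
      (z - j - 1) * (tower (-1) (2 * j + 2) z * tower (-1) (2 * j + 2) (z + 1)) := by
  rw [show 2 * j + 3 = 2 * j + 2 + 1 by ring, tower_neg_one_add_one (2 * j + 2) z,
    show (2 * j + 2) / 2 = j + 1 by omega, show (2 * j + 2 + 2) / 2 = j + 1 + 1 by omega,
    risingFact_add_one' _ (by omega), show 2 * j + 2 = 2 * j + 1 + 1 by ring,
    tower_neg_one_add_one (2 * j + 1) z, show (2 * j + 1) / 2 = j by omega,
    show (2 * j + 1 + 2) / 2 = j + 1 by omega]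
  push_cast
  ring_nf

lemma tower_three_skip_even {j : ℤ} (hj : -1 ≤ j) (y : R) :
    tower 3 (2 * j + 2) y * tower 3 (2 * j) (y + 2) * (y + 3 * j + 2) =
      (y + 2 * j + 1) * (tower 3 (2 * j + 1) y * tower 3 (2 * j + 1) (y + 2)) := by
  have h := (risingFact_add_one (y + 2 * j + 1) (m := j + 1) (by omega)).symm.trans
    (risingFact_add_one' (y + 2 * j + 1) (by omega))
  rw [show 2 * j + 2 = 2 * j + 1 + 1 by ring, tower_three_add_one (2 * j + 1) y,
    tower_three_add_one (2 * j) (y + 2), show (2 * j + 1 + 2) / 2 = j + 1 by omega,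
    show (2 * j + 2) / 2 = j + 1 by omega]
  push_cast at h ⊢
  linear_combination (norm := ring_nf)
    tower 3 (2 * j + 1) y * tower 3 (2 * j) (y + 2) * h

lemma tower_three_skip_odd {j : ℤ} (hj : -1 ≤ j) (y : R) :
    tower 3 (2 * j + 3) y * tower 3 (2 * j + 1) (y + 2) =
      (y + 2 * j + 2) * (tower 3 (2 * j + 2) y * tower 3 (2 * j + 2) (y + 2)) := by
  rw [show 2 * j + 3 = 2 * j + 2 + 1 by ring, tower_three_add_one (2 * j + 2) y,
    show (2 * j + 2 + 2) / 2 = j + 1 + 1 by omega, risingFact_add_one' _ (by omega),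
    show 2 * j + 2 = 2 * j + 1 + 1 by ring, tower_three_add_one (2 * j + 1) (y + 2),
    show (2 * j + 1 + 2) / 2 = j + 1 by omega]
  push_cast
  ring_nf

lemma tower_three_exchange {m : ℤ} (hm : -1 ≤ m) (y : R) :
    tower 3 (m + 1) y * tower 3 m (y + 1) * (y + m + ((m + 2) / 2 : ℤ)) =
      (y + m) * (tower 3 m y * tower 3 (m + 1) (y + 1)) := by
  have h := (risingFact_add_one (y + m) (m := (m + 2) / 2) (by omega)).symm.trans
    (risingFact_add_one' (y + m) (by omega))
  rw [tower_three_add_one m y, tower_three_add_one m (y + 1), add_right_comm y 1]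
  linear_combination tower 3 m y * tower 3 m (y + 1) * h

lemma tower_neg_one_exchange {m : ℤ} (hm : -1 ≤ m) (z : R) :
    tower (-1) (m + 1) z * tower (-1) m z * (z - ((m + 2) / 2 : ℤ)) =
      z * (tower (-1) (m + 1) (z - 1) * tower (-1) m (z + 1)) := by
  obtain ⟨l, hl⟩ : ∃ l, (m + 2) / 2 = l := ⟨_, rfl⟩
  have h := (risingFact_add_one (z - l) (m := l) (by omega)).symm.trans
    (risingFact_add_one' (z - l) (by omega))
  rw [tower_neg_one_add_one m z, tower_neg_one_add_one m (z - 1), hl,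
    show m / 2 = l - 1 by omega]
  push_cast
  linear_combination (norm := ring_nf) -(tower (-1) m z * tower (-1) m (z + 1) * h)

lemma tower_neg_one_cross {m : ℤ} (hm : 1 ≤ m) (z : R) :
    tower (-1) m z * tower (-1) (m - 3) (z - 2) * (z - (m / 2 : ℤ) - 1) =
      (z + m - 1) * (z + m - 2) * (tower (-1) (m - 1) (z - 2) * tower (-1) (m - 2) z) := by
  obtain rfl | rfl | h3 : m = 1 ∨ m = 2 ∨ 3 ≤ m := by omega
  · simp [tower, risingFact]
    ring
  · simp [tower, risingFact, prod_range_succ]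
    ring
  · have ih := tower_neg_one_cross (m := m - 2) (by omega) (z + -1)
    have h₁ : risingFact z m = risingFact z (m - 2) * (z + m - 2) * (z + m - 1) := by
      rw [show m = m - 2 + 1 + 1 by ring, risingFact_add_one _ (by omega),
        risingFact_add_one _ (by omega)]
      push_cast
      ring_nf
    have h₂ : risingFact (z - 2) (m - 1) =
        risingFact (z - 2) (m - 3) * (z + m - 5) * (z + m - 4) := by
      rw [show m - 1 = m - 3 + 1 + 1 by ring, risingFact_add_one _ (by omega),
        risingFact_add_one _ (by omega)]
      push_cast
      ring_nf
    rw [show (m - 2) / 2 = m / 2 - 1 by omega] at ih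
    rw [tower_peel (-1) m, tower_peel (-1) (m - 3), tower_peel (-1) (m - 1),
      tower_peel (-1) (m - 2) z, h₁, h₂]
    push_cast at ih ⊢
    linear_combination (norm := ring_nf) risingFact z (m - 2) * (z + m - 2) * (z + m - 1) *
      risingFact (z - 2) (m - 3) * ih
termination_by m.toNat

end Tower

section TowerPair

variable {F : Type*} [Field F] [CharZero F]

lemma towers_condense {m : ℤ} (hm : 0 ≤ m) {y z : F} (hz : z = y + 2 * m - 1 / 2) :
    tower 3 (m + 1) y * tower 3 (m - 1) (y + 1) *
        (tower (-1) m z * tower (-1) (m - 2) (z + 1)) =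
      (y + 3 * m / 2) * (tower 3 m y * tower 3 m (y + 1) *
        (tower (-1) (m - 1) z * tower (-1) (m - 1) (z + 1))) := by
  obtain ⟨j, rfl | rfl⟩ : ∃ j, m = 2 * j + 1 ∨ m = 2 * j + 2 :=
    ⟨(m - 1) / 2, by omega⟩
  · have hU := tower_three_condense_even j y
    have hD := tower_neg_one_condense_odd (j := j - 1) (by omega) z
    subst hz
    push_cast at hD ⊢
    linear_combination (norm := ring_nf) congrArg₂ (· * ·) hU hD
  · have hU := tower_three_condense_odd (j := j) (by omega) y
    have hD := tower_neg_one_condense_even j z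
    push_cast
    linear_combination (norm := ring_nf) congrArg₂ (· * ·) hU hD

lemma towers_skip {m : ℤ} (hm : 0 ≤ m) (y : F) :
    tower 3 (m + 1) (y + 3 / 2) * tower 3 (m - 1) (y + 7 / 2) *
        (tower (-1) m (y + 2 * m + 2) * tower (-1) m (y + 2 * m + 3)) * (y + (3 * m + 4) / 2) =
      (y + m + 3 / 2) * (tower 3 m (y + 3 / 2) * tower 3 m (y + 7 / 2) *
        (tower (-1) (m + 1) (y + 2 * m + 2) * tower (-1) (m - 1) (y + 2 * m + 3))) := by
  obtain ⟨j, rfl | rfl⟩ : ∃ j, m = 2 * j + 1 ∨ m = 2 * j + 2 :=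
    ⟨(m - 1) / 2, by omega⟩
  · have hU := tower_three_skip_even (j := j) (by omega) (y + 3 / 2)
    have hD := tower_neg_one_condense_even j (y + 2 * (2 * j + 1) + 2)
    push_cast
    linear_combination (norm := ring_nf) congrArg₂ (· * ·) hU hD.symm
  · have hU := tower_three_skip_odd (j := j) (by omega) (y + 3 / 2)
    have hD := tower_neg_one_condense_odd (j := j) (by omega) (y + 2 * (2 * j + 2) + 2)
    push_cast
    linear_combination (norm := ring_nf) congrArg₂ (· * ·) hU hD.symm

lemma towers_exchange {m : ℤ} (hm : 0 ≤ m) {y z : F} (hz : z = y + 2 * m + 5 / 2) :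
    tower 3 m (y + 2) * tower 3 m (y + 3) *
        (tower (-1) (m + 1) (z + 1) * tower (-1) (m - 1) (z - 1)) * (y + (3 * m + 4) / 2) =
      (z + m + 1) * (tower 3 (m + 1) (y + 2) * tower 3 (m - 1) (y + 3) *
        (tower (-1) m (z - 1) * tower (-1) m (z + 1))) := by
  have h := towers_condense hm (y := y + 2) (z := z - 1) (by linear_combination hz)
  rw [tower_peel (-1) (m + 1) (z + 1), tower_peel (-1) m (z + 1), risingFact_add_one _ hm]
  linear_combination (norm := ring_nf) -(risingFact (z + 1) m * (z + m + 1) * h)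

lemma towers_exchange' {m : ℤ} (hm : 0 ≤ m) {y z : F} (hz : z = y + 2 * m + 5 / 2) :
    tower 3 m (y + 2) * tower 3 m (y + 3) *
        (tower (-1) (m + 1) z * tower (-1) (m - 1) z) * (y + (3 * m + 4) / 2) =
      z * (tower 3 (m + 1) (y + 2) * tower 3 (m - 1) (y + 3) *
        (tower (-1) m (z - 1) * tower (-1) m (z + 1))) := by
  have h := towers_condense hm (y := y + 2) (z := z - 1) (by linear_combination hz)
  rw [tower_peel (-1) (m + 1) z, tower_peel (-1) m (z + 1), risingFact_add_one' _ hm]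
  linear_combination (norm := ring_nf) -(risingFact (z + 1) m * z * h)

end TowerPair

section ProductFormula

variable {F : Type*} [Field F]

/-- The product over `i` in the formula for `d_{2m,0}(x, q)`, at `x = 2 * y`. -/
def factorZero (m : ℤ) (y : F) : F :=
  tower 3 m (y + 1 / 2) * tower 3 (m - 2) (y + 7 / 2) * tower (-1) (m - 1) (y + 2 * m) ^ 2

/-- The product over `i` in the formula for `d_{n,1}(x, q)`, at `x = 2 * y`. -/
def factorOne (n : ℤ) (y : F) : F :=
  tower 3 (n / 2) (y + 1) * tower 3 ((n - 3) / 2) (y + 3) *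
    (tower (-1) ((n - 1) / 2) (y + n + 1 / 2) * tower (-1) ((n - 2) / 2) (y + n - 1 / 2))

/-- The product over `i` in the formula for `d_{n,2}(x, q)`, at `x = 2 * y`. -/
def factorTwo (n : ℤ) (y : F) : F :=
  tower (-1) (n / 2) (y + n) * tower (-1) ((n - 3) / 2) (y + n) *
    (tower 3 ((n - 1) / 2) (y + 3 / 2) * tower 3 ((n - 2) / 2) (y + 5 / 2))

/-- The product over `i` in the formula for `d_{n,3}(x, q)`, at `x = 2 * y`. -/
def factorThree (n : ℤ) (y : F) : F :=
  tower 3 ((n - 1) / 2) (y + 2) * tower 3 ((n - 2) / 2) (y + 2) *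
    (tower (-1) (n / 2) (y + 2 * (n / 2 : ℤ) + 1 / 2) *
      tower (-1) ((n - 3) / 2) (y + 2 * ((n - 1) / 2 : ℤ) + 3 / 2))

lemma factorOne_two_mul (m : ℤ) (y : F) :
    factorOne (2 * m) y = tower 3 m (y + 1) * tower 3 (m - 2) (y + 3) *
      (tower (-1) (m - 1) (y + 2 * m + 1 / 2) * tower (-1) (m - 1) (y + 2 * m - 1 / 2)) := by
  rw [factorOne, show 2 * m / 2 = m by omega, show (2 * m - 3) / 2 = m - 2 by omega,
    show (2 * m - 1) / 2 = m - 1 by omega, show (2 * m - 2) / 2 = m - 1 by omega]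
  push_cast
  rfl

lemma factorOne_two_mul_add_one (m : ℤ) (y : F) :
    factorOne (2 * m + 1) y = tower 3 m (y + 1) * tower 3 (m - 1) (y + 3) *
      (tower (-1) m (y + 2 * m + 1 + 1 / 2) * tower (-1) (m - 1) (y + 2 * m + 1 - 1 / 2)) := by
  rw [factorOne, show (2 * m + 1) / 2 = m by omega, show (2 * m + 1 - 3) / 2 = m - 1 by omega,
    show (2 * m + 1 - 1) / 2 = m by omega, show (2 * m + 1 - 2) / 2 = m - 1 by omega]
  push_cast
  rw [← add_assoc]

lemma factorTwo_two_mul (m : ℤ) (y : F) :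
    factorTwo (2 * m) y = tower (-1) m (y + 2 * m) * tower (-1) (m - 2) (y + 2 * m) *
      (tower 3 (m - 1) (y + 3 / 2) * tower 3 (m - 1) (y + 5 / 2)) := by
  rw [factorTwo, show 2 * m / 2 = m by omega, show (2 * m - 3) / 2 = m - 2 by omega,
    show (2 * m - 1) / 2 = m - 1 by omega, show (2 * m - 2) / 2 = m - 1 by omega]
  push_cast
  rfl

lemma factorTwo_two_mul_add_one (m : ℤ) (y : F) :
    factorTwo (2 * m + 1) y =
      tower (-1) m (y + 2 * m + 1) * tower (-1) (m - 1) (y + 2 * m + 1) *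
        (tower 3 m (y + 3 / 2) * tower 3 (m - 1) (y + 5 / 2)) := by
  rw [factorTwo, show (2 * m + 1) / 2 = m by omega, show (2 * m + 1 - 3) / 2 = m - 1 by omega,
    show (2 * m + 1 - 1) / 2 = m by omega, show (2 * m + 1 - 2) / 2 = m - 1 by omega]
  push_cast
  rw [← add_assoc]

lemma factorThree_two_mul (m : ℤ) (y : F) :
    factorThree (2 * m) y = tower 3 (m - 1) (y + 2) ^ 2 *
      (tower (-1) m (y + 2 * m + 1 / 2) * tower (-1) (m - 2) (y + 2 * (m - 1) + 3 / 2)) := by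
  rw [factorThree, show 2 * m / 2 = m by omega, show (2 * m - 3) / 2 = m - 2 by omega,
    show (2 * m - 1) / 2 = m - 1 by omega, show (2 * m - 2) / 2 = m - 1 by omega]
  push_cast
  rw [sq]

lemma factorThree_two_mul_add_one (m : ℤ) (y : F) :
    factorThree (2 * m + 1) y = tower 3 m (y + 2) * tower 3 (m - 1) (y + 2) *
      (tower (-1) m (y + 2 * m + 1 / 2) * tower (-1) (m - 1) (y + 2 * m + 3 / 2)) := by
  rw [factorThree, show (2 * m + 1) / 2 = m by omega, show (2 * m + 1 - 3) / 2 = m - 1 by omega,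
    show (2 * m + 1 - 1) / 2 = m by omega, show (2 * m + 1 - 2) / 2 = m - 1 by omega]

lemma IsGeneric.tower_ne_zero {z : F} (hz : IsGeneric z) (s m : ℤ) : tower (s : F) m z ≠ 0 :=
  prod_ne_zero_iff.2 fun i _ => by
    exact_mod_cast (hz.add_intCast (s * i)).risingFact_ne_zero (m - 2 * i)

lemma tower_three_ne_zero {y z : F} (hy : IsGeneric (2 * y)) (b : ℤ) (hz : 2 * z = 2 * y + b)
    (m : ℤ) : tower 3 m z ≠ 0 := by
  exact_mod_cast (hy.of_two_mul_eq b hz).tower_ne_zero 3 m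

lemma tower_neg_one_ne_zero {y z : F} (hy : IsGeneric (2 * y)) (b : ℤ) (hz : 2 * z = 2 * y + b)
    (m : ℤ) : tower (-1) m z ≠ 0 := by
  exact_mod_cast (hy.of_two_mul_eq b hz).tower_ne_zero (-1) m

variable [CharZero F] {m : ℤ}

lemma factorZero_condense (hm : 0 ≤ m) (y : F) :
    factorZero (m + 1) y * factorZero m (y + 1) =
      (y + 1 / 2) * factorOne (2 * m + 1) (y + 1 / 2) ^ 2 := by
  have h := tower_mul_tower_peel' 3 hm (y + 1 / 2)
  simp only [factorZero, factorOne_two_mul_add_one]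
  push_cast
  linear_combination (norm := ring_nf) tower 3 (m - 1) (y + 7 / 2) * tower 3 m (y + 3 / 2) *
    tower (-1) m (y + 2 * m + 2) ^ 2 * tower (-1) (m - 1) (y + 2 * m + 1) ^ 2 * h

lemma factorOne_condense_even (hm : 0 ≤ m) (y : F) :
    factorOne (2 * (m + 1)) y * factorOne (2 * m) (y + 1) =
      (y + m + 1) * (factorOne (2 * m + 1) y * factorOne (2 * m + 1) (y + 1)) := by
  have h := tower_mul_tower_peel 3 hm (y + 1)
  simp only [factorOne_two_mul, factorOne_two_mul_add_one]
  push_cast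
  linear_combination (norm := ring_nf) tower 3 (m - 1) (y + 3) * tower 3 m (y + 2) *
    tower (-1) m (y + 2 * m + 5 / 2) * tower (-1) m (y + 2 * m + 3 / 2) *
    tower (-1) (m - 1) (y + 2 * m + 3 / 2) * tower (-1) (m - 1) (y + 2 * m + 1 / 2) * h

lemma factorTwo_condense_even (hm : 0 ≤ m) (y : F) :
    factorTwo (2 * (m + 1)) y * factorTwo (2 * m) (y + 1) =
      (y + 3 * m + 2) * (factorTwo (2 * m + 1) y * factorTwo (2 * m + 1) (y + 1)) := by
  have h := tower_mul_tower_peel (-1) hm (y + 2 * m + 2)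
  simp only [factorTwo_two_mul, factorTwo_two_mul_add_one]
  push_cast
  linear_combination (norm := ring_nf) tower (-1) (m - 1) (y + 2 * m + 2) *
    tower (-1) m (y + 2 * m + 1) * tower 3 m (y + 3 / 2) * tower 3 m (y + 5 / 2) *
    tower 3 (m - 1) (y + 5 / 2) * tower 3 (m - 1) (y + 7 / 2) * h

lemma factorOne_mul_factorThree_odd (m : ℤ) (y : F) :
    factorOne (2 * m + 1) (y + 1 / 2) * factorThree (2 * m + 1) (y + 1 / 2) =
      factorTwo (2 * m + 1) y * factorTwo (2 * m + 1) (y + 1) := by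
  simp only [factorOne_two_mul_add_one, factorThree_two_mul_add_one, factorTwo_two_mul_add_one]
  ring_nf

lemma half_step_mul_half_step (m : ℤ) (y : F) :
    (y + m + 1 + ((m + 1) / 2 : ℤ)) * (y + 2 * m + 3 / 2 - ((m + 1) / 2 : ℤ)) =
      (y + 3 * (m + 1) / 2) * (y + (3 * m + 2) / 2) := by
  obtain ⟨j, rfl | rfl⟩ := m.even_or_odd'
  · rw [show (2 * j + 1) / 2 = j by omega]
    push_cast
    ring
  · rw [show (2 * j + 1 + 1) / 2 = j + 1 by omega]
    push_cast
    ring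

lemma factorThree_condense_even (hm : 0 ≤ m) (y : F) :
    factorThree (2 * (m + 1)) y * factorThree (2 * m) (y + 1) *
        ((y + 3 * (m + 1) / 2) * (y + (3 * m + 2) / 2)) =
      (y + m + 1) * (y + 3 * m + 5 / 2) * (y + 3 * m + 3 / 2) *
        (factorThree (2 * m + 1) y * factorThree (2 * m + 1) (y + 1)) := by
  have hup := tower_three_exchange (m := m - 1) (by omega) (y + 2)
  have hdown := tower_neg_one_cross (m := m + 1) (by omega) (y + 2 * m + 5 / 2)
  rw [← half_step_mul_half_step]
  rw [show m - 1 + 2 = m + 1 by ring] at hup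
  simp only [factorThree_two_mul, factorThree_two_mul_add_one]
  push_cast at hup hdown ⊢
  linear_combination (norm := ring_nf) tower 3 m (y + 2) * tower 3 (m - 1) (y + 3) *
    tower (-1) (m - 1) (y + 2 * m + 3 / 2) * tower (-1) m (y + 2 * m + 3 / 2) *
    congrArg₂ (· * ·) hup hdown

lemma factorTwo_sq_odd (hm : 0 ≤ m) (y : F) :
    factorTwo (2 * m + 1) (y + 1 / 2) ^ 2 *
        ((y + 3 * (m + 1) / 2) * (y + (3 * m + 2) / 2)) =
      (y + 2 * m + 3 / 2) * (y + m + 1) *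
        (factorThree (2 * m + 1) y * factorThree (2 * m + 1) (y + 1)) := by
  have hup := tower_three_exchange (m := m - 1) (by omega) (y + 2)
  have hdown := tower_neg_one_exchange (m := m - 1) (by omega) (y + 2 * m + 3 / 2)
  rw [← half_step_mul_half_step]
  rw [show m - 1 + 2 = m + 1 by ring] at hup hdown
  simp only [factorTwo_two_mul_add_one, factorThree_two_mul_add_one]
  push_cast at hup hdown ⊢
  linear_combination (norm := ring_nf) tower 3 m (y + 2) * tower 3 (m - 1) (y + 3) *
    tower (-1) m (y + 2 * m + 3 / 2) * tower (-1) (m - 1) (y + 2 * m + 3 / 2) *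
    congrArg₂ (· * ·) hup hdown

lemma factorOne_condense_odd (hm : 0 ≤ m) (y : F) :
    factorOne (2 * (m + 1) + 1) y * factorOne (2 * m + 1) (y + 1) * (y + (3 * m + 4) / 2) =
      (y + 3 * m + 7 / 2) * (factorOne (2 * (m + 1)) y * factorOne (2 * (m + 1)) (y + 1)) := by
  have h := towers_exchange hm (y := y) rfl
  simp only [factorOne_two_mul, factorOne_two_mul_add_one]
  push_cast
  linear_combination (norm := ring_nf) tower 3 (m + 1) (y + 1) * tower 3 (m - 1) (y + 4) *
    tower (-1) m (y + 2 * m + 5 / 2) ^ 2 * h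

lemma factorZero_mul_factorTwo (hm : 0 ≤ m) (y : F) :
    factorZero (m + 1) (y + 1 / 2) * factorTwo (2 * (m + 1)) (y + 1 / 2) *
        (y + (3 * m + 4) / 2) =
      (y + 2 * m + 5 / 2) *
        (factorOne (2 * (m + 1)) y * factorOne (2 * (m + 1)) (y + 1)) := by
  have h := towers_exchange' hm (y := y) rfl
  simp only [factorZero, factorOne_two_mul, factorTwo_two_mul]
  push_cast
  linear_combination (norm := ring_nf) tower 3 (m + 1) (y + 1) * tower 3 (m - 1) (y + 4) *
    tower (-1) m (y + 2 * m + 5 / 2) ^ 2 * h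

lemma factorTwo_condense_odd (hm : 0 ≤ m) (y : F) :
    factorTwo (2 * (m + 1) + 1) y * factorTwo (2 * m + 1) (y + 1) * (y + (3 * m + 4) / 2) =
      (y + m + 3 / 2) * (factorTwo (2 * (m + 1)) y * factorTwo (2 * (m + 1)) (y + 1)) := by
  have h := towers_skip hm y
  simp only [factorTwo_two_mul, factorTwo_two_mul_add_one]
  push_cast
  linear_combination (norm := ring_nf) tower 3 m (y + 5 / 2) ^ 2 *
    tower (-1) (m + 1) (y + 2 * m + 3) * tower (-1) (m - 1) (y + 2 * m + 2) * h

lemma factorOne_mul_factorThree_even (hm : 0 ≤ m) (y : F) :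
    factorOne (2 * (m + 1)) (y + 1 / 2) * factorThree (2 * (m + 1)) (y + 1 / 2) *
        (y + (3 * m + 4) / 2) =
      (y + m + 3 / 2) * (factorTwo (2 * (m + 1)) y * factorTwo (2 * (m + 1)) (y + 1)) := by
  have h := towers_skip hm y
  simp only [factorOne_two_mul, factorTwo_two_mul, factorThree_two_mul]
  push_cast
  linear_combination (norm := ring_nf) tower 3 m (y + 5 / 2) ^ 2 *
    tower (-1) (m + 1) (y + 2 * m + 3) * tower (-1) (m - 1) (y + 2 * m + 2) * h

lemma factorThree_condense_odd (hm : 0 ≤ m) (y : F) :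
    factorThree (2 * (m + 1) + 1) y * factorThree (2 * m + 1) (y + 1) *
        (y + 3 * m + 7 / 2) =
      (y + (3 * m + 4) / 2) *
        (factorThree (2 * (m + 1)) y * factorThree (2 * (m + 1)) (y + 1)) := by
  have h := towers_exchange hm (y := y) rfl
  simp only [factorThree_two_mul, factorThree_two_mul_add_one]
  push_cast
  linear_combination (norm := ring_nf) -(tower 3 m (y + 2) * tower 3 m (y + 3) *
    tower (-1) (m + 1) (y + 2 * m + 5 / 2) * tower (-1) (m - 1) (y + 2 * m + 5 / 2) * h)

lemma factorTwo_sq_even (hm : 0 ≤ m) (y : F) :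
    factorTwo (2 * (m + 1)) (y + 1 / 2) ^ 2 * (y + 3 * m + 7 / 2) =
      (y + 2 * m + 5 / 2) *
        (factorThree (2 * (m + 1)) y * factorThree (2 * (m + 1)) (y + 1)) := by
  have h : tower (-1) (m + 1) (y + 2 * m + 5 / 2) * tower (-1) (m - 1) (y + 2 * m + 5 / 2) *
      (y + 3 * m + 7 / 2) = (y + 2 * m + 5 / 2) *
        (tower (-1) (m + 1) (y + 2 * m + 7 / 2) * tower (-1) (m - 1) (y + 2 * m + 3 / 2)) := by
    rw [tower_peel (-1) (m + 1) (y + 2 * m + 5 / 2), tower_peel (-1) (m + 1) (y + 2 * m + 7 / 2),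
      risingFact_add_one' _ hm, risingFact_add_one _ hm]
    ring_nf
  simp only [factorTwo_two_mul, factorThree_two_mul]
  push_cast
  linear_combination (norm := ring_nf) tower 3 m (y + 2) ^ 2 * tower 3 m (y + 3) ^ 2 *
    tower (-1) (m + 1) (y + 2 * m + 5 / 2) * tower (-1) (m - 1) (y + 2 * m + 5 / 2) * h

lemma IsGeneric.two_mul_add_half {y : F} (hy : IsGeneric (2 * y)) :
    IsGeneric (2 * (y + 1 / 2)) := by
  simpa [mul_add] using hy.add_intCast 1

lemma IsGeneric.add_half_intCast_ne_zero {y : F} (hy : IsGeneric (2 * y)) (b : ℤ) :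
    y + b / 2 ≠ 0 := fun h =>
  hy.add_intCast_ne_zero b (by linear_combination 2 * h)

lemma factorZero_ne_zero {y : F} (hy : IsGeneric (2 * y)) (m : ℤ) : factorZero m y ≠ 0 :=
  mul_ne_zero (mul_ne_zero (tower_three_ne_zero hy 1 (by push_cast; ring) _)
    (tower_three_ne_zero hy 7 (by push_cast; ring) _))
    (pow_ne_zero _ (tower_neg_one_ne_zero hy (4 * m) (by push_cast; ring) _))

lemma factorOne_ne_zero {y : F} (hy : IsGeneric (2 * y)) (n : ℤ) : factorOne n y ≠ 0 :=
  mul_ne_zero (mul_ne_zero (tower_three_ne_zero hy 2 (by push_cast; ring) _)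
    (tower_three_ne_zero hy 6 (by push_cast; ring) _))
    (mul_ne_zero (tower_neg_one_ne_zero hy (2 * n + 1) (by push_cast; ring) _)
      (tower_neg_one_ne_zero hy (2 * n - 1) (by push_cast; ring) _))

lemma factorTwo_ne_zero {y : F} (hy : IsGeneric (2 * y)) (n : ℤ) : factorTwo n y ≠ 0 :=
  mul_ne_zero (mul_ne_zero (tower_neg_one_ne_zero hy (2 * n) (by push_cast; ring) _)
    (tower_neg_one_ne_zero hy (2 * n) (by push_cast; ring) _))
    (mul_ne_zero (tower_three_ne_zero hy 3 (by push_cast; ring) _)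
      (tower_three_ne_zero hy 5 (by push_cast; ring) _))

lemma factorThree_ne_zero {y : F} (hy : IsGeneric (2 * y)) (n : ℤ) : factorThree n y ≠ 0 :=
  mul_ne_zero (mul_ne_zero (tower_three_ne_zero hy 4 (by push_cast; ring) _)
    (tower_three_ne_zero hy 4 (by push_cast; ring) _))
    (mul_ne_zero (tower_neg_one_ne_zero hy (4 * (n / 2) + 1) (by push_cast; ring) _)
      (tower_neg_one_ne_zero hy (4 * ((n - 1) / 2) + 3) (by push_cast; ring) _))

end ProductFormula

section Normalization

lemma prodFact1_eq_div (n : ℕ) :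
    prodFact1 n = (∏ i ∈ range (n / 2), (i.factorial : ℂ)) *
      (∏ i ∈ range ((n + 1) / 2), (i.factorial : ℂ)) / ∏ i ∈ range n, (i.factorial : ℂ) := by
  have hsplit := prod_range_add (fun i => (i.factorial : ℂ)) (n / 2) ((n + 1) / 2)
  have hreflect := prod_range_reflect (fun i => ((n / 2 + i).factorial : ℂ)) ((n + 1) / 2)
  have hdenom : ∏ i ∈ range ((n + 1) / 2), ((n - 1 - i).factorial : ℂ) =
      ∏ i ∈ range ((n + 1) / 2), ((n / 2 + ((n + 1) / 2 - 1 - i)).factorial : ℂ) :=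
    prod_congr rfl fun i hi => by
      rw [show n / 2 + ((n + 1) / 2 - 1 - i) = n - 1 - i by have := mem_range.1 hi; omega]
  have hne (s : Finset ℕ) : ∏ i ∈ s, (i.factorial : ℂ) ≠ 0 :=
    prod_ne_zero_iff.2 fun i _ => Nat.cast_ne_zero.2 i.factorial_ne_zero
  rw [show n / 2 + (n + 1) / 2 = n by omega] at hsplit
  rw [prodFact1, prod_div_distrib, hdenom, hreflect, hsplit, mul_div_mul_left _ _ (hne _)]

lemma prodFact1_succ (n : ℕ) :
    prodFact1 (n + 1) = prodFact1 n * (n / 2).factorial / n.factorial := by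
  rw [prodFact1_eq_div, prodFact1_eq_div, show (n + 1 + 1) / 2 = n / 2 + 1 by omega,
    prod_range_succ, prod_range_succ _ n]
  field_simp

/-- The rational constant common to the formulas for `d_{n,k}(x, q)`. -/
def scale (n : ℕ) : ℂ :=
  2 ^ (n / 2 * ((n + 1) / 2)) * prodFact1 n

lemma scale_succ (n : ℕ) :
    scale (n + 1) = scale n * (2 ^ ((n + 1) / 2) * (n / 2).factorial / n.factorial) := by
  rw [scale, scale, prodFact1_succ, show (n + 1 + 1) / 2 = n / 2 + 1 by omega,
    show (n + 1) / 2 * (n / 2 + 1) = n / 2 * ((n + 1) / 2) + (n + 1) / 2 by ring, pow_add]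
  ring

lemma scale_ne_zero (n : ℕ) : scale n ≠ 0 := by
  rw [scale, prodFact1]
  refine mul_ne_zero (pow_ne_zero _ two_ne_zero) (prod_ne_zero_iff.2 fun i _ => ?_)
  exact div_ne_zero (Nat.cast_ne_zero.2 (Nat.factorial_ne_zero _))
    (Nat.cast_ne_zero.2 (Nat.factorial_ne_zero _))

lemma scale_condense_even (m : ℕ) :
    (2 * m + 1) * (scale (2 * (m + 1)) * scale (2 * m)) = 2 * scale (2 * m + 1) ^ 2 := by
  rw [show 2 * (m + 1) = 2 * m + 1 + 1 from rfl, scale_succ (2 * m + 1), scale_succ (2 * m),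
    show (2 * m + 1 + 1) / 2 = m + 1 by omega, show (2 * m + 1) / 2 = m by omega,
    show 2 * m / 2 = m by omega, Nat.factorial_succ (2 * m)]
  have hf : ((2 * m).factorial : ℂ) ≠ 0 := Nat.cast_ne_zero.2 (Nat.factorial_ne_zero _)
  have hm : (2 * m + 1 : ℂ) ≠ 0 := by exact_mod_cast (2 * m).succ_ne_zero
  push_cast
  field_simp
  ring

lemma scale_condense_odd (m : ℕ) :
    (2 * m + 2) * (scale (2 * (m + 1) + 1) * scale (2 * m + 1)) =
      (m + 1) * scale (2 * (m + 1)) ^ 2 := by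
  rw [scale_succ (2 * (m + 1)), show 2 * (m + 1) = 2 * m + 1 + 1 from rfl, scale_succ (2 * m + 1),
    show (2 * m + 1 + 1 + 1) / 2 = m + 1 by omega, show (2 * m + 1 + 1) / 2 = m + 1 by omega,
    show (2 * m + 1) / 2 = m by omega, Nat.factorial_succ (2 * m + 1), Nat.factorial_succ m]
  have hf : ((2 * m + 1).factorial : ℂ) ≠ 0 := Nat.cast_ne_zero.2 (Nat.factorial_ne_zero _)
  have hm : (2 * m + 1 + 1 : ℂ) ≠ 0 := by exact_mod_cast (2 * m + 1).succ_ne_zero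
  push_cast
  field_simp
  ring

/-- The value of `d_{n,k}(x, q)` at `x = 2 * y` with the rational constant `scale n` divided out. -/
def normVal (q : ℂ) (n : ℕ) (k : ℤ) (y : ℂ) : ℂ :=
  dVal q n k (2 * y) / scale n

lemma dVal_two_mul (q : ℂ) (n : ℕ) (k : ℤ) (y : ℂ) :
    dVal q n k (2 * y) = scale n * normVal q n k y := by
  rw [normVal, mul_div_cancel₀ _ (scale_ne_zero n)]

lemma dVal_condensation_two_mul (q : ℂ) (n : ℕ) (k : ℤ) {y : ℂ} (hy : IsGeneric (2 * y)) :
    (n + 1) * (scale (n + 2) * scale n) * (normVal q (n + 2) k y * normVal q n k (y + 1)) =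
      scale (n + 1) ^ 2 * ((2 * y + n + 2) * (normVal q (n + 1) k y * normVal q (n + 1) k (y + 1)) -
        (2 * y + 1) *
          (normVal q (n + 1) (k - 1) (y + 1 / 2) * normVal q (n + 1) (k + 1) (y + 1 / 2))) := by
  have h := dVal_condensation q n k hy
  rw [show 2 * y + 2 = 2 * (y + 1) by ring, show 2 * y + 1 = 2 * (y + 1 / 2) by ring] at h
  simp only [dVal_two_mul] at h
  linear_combination h

lemma normVal_condense_even (q : ℂ) (m : ℕ) (k : ℤ) {y : ℂ} (hy : IsGeneric (2 * y)) :
    2 * (normVal q (2 * (m + 1)) k y * normVal q (2 * m) k (y + 1)) =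
      (2 * y + 2 * m + 2) * (normVal q (2 * m + 1) k y * normVal q (2 * m + 1) k (y + 1)) -
        (2 * y + 1) *
          (normVal q (2 * m + 1) (k - 1) (y + 1 / 2) *
            normVal q (2 * m + 1) (k + 1) (y + 1 / 2)) := by
  have h := dVal_condensation_two_mul q (2 * m) k hy
  push_cast at h
  rw [show 2 * m + 2 = 2 * (m + 1) from rfl, scale_condense_even] at h
  exact mul_left_cancel₀ (pow_ne_zero 2 (scale_ne_zero (2 * m + 1))) (by linear_combination h)

lemma normVal_condense_odd (q : ℂ) (m : ℕ) (k : ℤ) {y : ℂ} (hy : IsGeneric (2 * y)) :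
    (m + 1) * (normVal q (2 * (m + 1) + 1) k y * normVal q (2 * m + 1) k (y + 1)) =
      (2 * y + 2 * m + 3) * (normVal q (2 * (m + 1)) k y * normVal q (2 * (m + 1)) k (y + 1)) -
        (2 * y + 1) *
          (normVal q (2 * (m + 1)) (k - 1) (y + 1 / 2) *
            normVal q (2 * (m + 1)) (k + 1) (y + 1 / 2)) := by
  have h := dVal_condensation_two_mul q (2 * m + 1) k hy
  push_cast at h
  rw [show 2 * m + 1 + 2 = 2 * (m + 1) + 1 from rfl, show 2 * m + 1 + 1 = 2 * (m + 1) from rfl,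
    show (2 * m + 1 + 1 : ℂ) = 2 * m + 2 by ring, scale_condense_odd] at h
  exact mul_left_cancel₀ (pow_ne_zero 2 (scale_ne_zero (2 * (m + 1)))) (by linear_combination h)

variable {q : ℂ} {y : ℂ}

lemma normVal_neg_one (hq : IsPrimitiveRoot q 3) (n : ℕ) (hy : IsGeneric (2 * y)) :
    normVal q n (-1) y = (q ^ 2) ^ n * normVal q n 1 y := by
  rw [normVal, normVal, ← mul_div_assoc, ← dVal_five hq n hy, ← eval_dF q n (-1),
    show (-1 : ℤ) = 6 * (-1) + 5 from rfl, dF_six_mul_add hq, eval_dF]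

lemma normVal_four (hq : IsPrimitiveRoot q 3) (n : ℕ) (hy : IsGeneric (2 * y)) :
    normVal q n 4 y = (-q) ^ n * normVal q n 2 y := by
  rw [normVal, normVal, ← mul_div_assoc, dVal_four hq n hy]

lemma normVal_zero_odd (hq : IsPrimitiveRoot q 3) (m : ℕ) (hy : IsGeneric (2 * y)) :
    normVal q (2 * m + 1) 0 y = 0 := by
  rw [normVal, dVal_zero_odd hq ⟨m, rfl⟩ hy, zero_div]

end Normalization

section ClosedForms

/-- The product formulas at size `n`, for the normalised values at all generic points. In this form
the factors `3 ^ (-⌊n / 2⌋) * (1 - q) ^ n` of `d_{n,2}` are `(-q) ^ ⌊n / 2⌋ * (1 - q) ^ (n mod 2)`,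
since `(1 - q) ^ 2 = -3 * q`. -/
structure HasClosedForms (q : ℂ) (n : ℕ) : Prop where
  zero : ∀ m, n = 2 * m → ∀ ⦃y⦄, IsGeneric (2 * y) →
    normVal q n 0 y = (-q ^ 2) ^ m * factorZero m y
  one : ∀ ⦃y⦄, IsGeneric (2 * y) → normVal q n 1 y = factorOne n y
  two : ∀ ⦃y⦄, IsGeneric (2 * y) →
    normVal q n 2 y = (-q) ^ (n / 2) * (1 - q) ^ (n % 2) * factorTwo n y
  three : ∀ ⦃y⦄, IsGeneric (2 * y) →
    normVal q n 3 y = (-q) ^ n * 2 ^ (n % 2) * factorThree n y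

namespace HasClosedForms

variable {q : ℂ} {m : ℕ} {y : ℂ}

lemma two_even (h : HasClosedForms q (2 * m)) (hy : IsGeneric (2 * y)) :
    normVal q (2 * m) 2 y = (-q) ^ m * factorTwo (2 * m) y := by
  simpa using h.two hy

lemma two_odd (h : HasClosedForms q (2 * m + 1)) (hy : IsGeneric (2 * y)) :
    normVal q (2 * m + 1) 2 y = (-q) ^ m * (1 - q) * factorTwo (2 * m + 1) y := by
  simpa [Nat.mul_add_div] using h.two hy

lemma three_even (h : HasClosedForms q (2 * m)) (hy : IsGeneric (2 * y)) :
    normVal q (2 * m) 3 y = (-q) ^ (2 * m) * factorThree (2 * m) y := by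
  simpa using h.three hy

lemma three_odd (h : HasClosedForms q (2 * m + 1)) (hy : IsGeneric (2 * y)) :
    normVal q (2 * m + 1) 3 y = (-q) ^ (2 * m + 1) * 2 * factorThree (2 * m + 1) y := by
  simpa [Nat.mul_add_mod] using h.three hy

lemma size_zero : HasClosedForms q 0 := by
  constructor <;> intros <;>
    simp_all [normVal, scale, prodFact1, dVal_zero, factorZero, factorOne, factorTwo, factorThree,
      tower_of_nonpos]

variable (hq : IsPrimitiveRoot q 3)

include hq

lemma zero_even_succ (he : HasClosedForms q (2 * m)) (ho : HasClosedForms q (2 * m + 1))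
    (hy : IsGeneric (2 * y)) :
    normVal q (2 * (m + 1)) 0 y = (-q ^ 2) ^ (m + 1) * factorZero (m + 1) y := by
  have h := normVal_condense_even q m 0 hy
  rw [zero_sub, zero_add, normVal_zero_odd hq m hy, normVal_neg_one hq _ hy.two_mul_add_half,
    ho.one hy.two_mul_add_half, he.zero m rfl hy.two_mul_add_one] at h
  have hF := factorZero_condense (Int.natCast_nonneg m) y
  have hne := mul_ne_zero
    (pow_ne_zero m (neg_ne_zero.2 (pow_ne_zero 2 (hq.ne_zero three_ne_zero))))
    (factorZero_ne_zero hy.two_mul_add_one m)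
  have hsign : (q ^ 2) ^ (2 * m + 1) = q ^ 2 * ((-q ^ 2) ^ m) ^ 2 := by
    rw [← pow_mul (-q ^ 2), mul_comm m, pow_mul (-q ^ 2), neg_sq]
    ring
  rw [hsign] at h
  push_cast at h hF
  refine mul_right_cancel₀ hne ?_
  linear_combination 1 / 2 * h + q ^ 2 * ((-q ^ 2) ^ m) ^ 2 * hF

lemma one_even_succ (he : HasClosedForms q (2 * m)) (ho : HasClosedForms q (2 * m + 1))
    (hy : IsGeneric (2 * y)) :
    normVal q (2 * (m + 1)) 1 y = factorOne (2 * (m + 1)) y := by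
  have h := normVal_condense_even q m 1 hy
  rw [sub_self, normVal_zero_odd hq m hy.two_mul_add_half, ho.one hy,
    ho.one hy.two_mul_add_one, he.one hy.two_mul_add_one] at h
  have hF := factorOne_condense_even (Int.natCast_nonneg m) y
  push_cast at h hF
  refine mul_right_cancel₀ (factorOne_ne_zero hy.two_mul_add_one (2 * m)) ?_
  linear_combination 1 / 2 * h - hF

lemma two_even_succ (he : HasClosedForms q (2 * m)) (ho : HasClosedForms q (2 * m + 1))
    (hy : IsGeneric (2 * y)) :
    normVal q (2 * (m + 1)) 2 y = (-q) ^ (m + 1) * factorTwo (2 * (m + 1)) y := by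
  have h := normVal_condense_even q m 2 hy
  rw [show (2 - 1 : ℤ) = 1 from rfl, show (2 + 1 : ℤ) = 3 from rfl, ho.two_odd hy,
    ho.two_odd hy.two_mul_add_one, ho.one hy.two_mul_add_half,
    ho.three_odd hy.two_mul_add_half, he.two_even hy.two_mul_add_one] at h
  have hF := factorTwo_condense_even (Int.natCast_nonneg m) y
  have hF' := factorOne_mul_factorThree_odd m y
  have hne := mul_ne_zero (pow_ne_zero m (neg_ne_zero.2 (hq.ne_zero three_ne_zero)))
    (factorTwo_ne_zero hy.two_mul_add_one (2 * m))
  push_cast at h hF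
  refine mul_right_cancel₀ hne ?_
  linear_combination 1 / 2 * h + (-q) ^ (2 * m) * q * (hF + (2 * y + 1) * hF') +
    (-q) ^ (2 * m) * (y + m + 1) * (factorTwo (2 * m + 1) y * factorTwo (2 * m + 1) (y + 1)) *
      sq_add_self_add_one_eq_zero hq

lemma three_even_succ (he : HasClosedForms q (2 * m)) (ho : HasClosedForms q (2 * m + 1))
    (hy : IsGeneric (2 * y)) :
    normVal q (2 * (m + 1)) 3 y = (-q) ^ (2 * (m + 1)) * factorThree (2 * (m + 1)) y := by
  have h := normVal_condense_even q m 3 hy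
  rw [show (3 - 1 : ℤ) = 2 from rfl, show (3 + 1 : ℤ) = 4 from rfl,
    normVal_four hq _ hy.two_mul_add_half, ho.three_odd hy, ho.three_odd hy.two_mul_add_one,
    ho.two_odd hy.two_mul_add_half, he.three_even hy.two_mul_add_one] at h
  have hF := factorThree_condense_even (Int.natCast_nonneg m) y
  have hF' := factorTwo_sq_odd (Int.natCast_nonneg m) y
  have hH := mul_ne_zero (hy.add_half_intCast_ne_zero (3 * (m + 1)))
    (hy.add_half_intCast_ne_zero (3 * m + 2))
  have hne := mul_ne_zero (pow_ne_zero (2 * m) (neg_ne_zero.2 (hq.ne_zero three_ne_zero)))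
    (factorThree_ne_zero hy.two_mul_add_one (2 * m))
  push_cast at hF hF' hH
  refine mul_right_cancel₀ (mul_ne_zero hne hH) ?_
  linear_combination 1 / 2 * ((y + 3 * (m + 1) / 2) * (y + (3 * m + 2) / 2)) * h -
    q ^ 2 * (-q) ^ (4 * m) * hF + 1 / 2 * (2 * y + 1) * q * (1 - q) ^ 2 * (-q) ^ (4 * m) * hF' +
    1 / 2 * (2 * y + 1) * q * (-q) ^ (4 * m) * ((y + 2 * m + 3 / 2) * (y + m + 1) *
      (factorThree (2 * m + 1) y * factorThree (2 * m + 1) (y + 1))) *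
      sq_add_self_add_one_eq_zero hq

lemma one_odd_succ (ho : HasClosedForms q (2 * m + 1)) (he : HasClosedForms q (2 * (m + 1)))
    (hy : IsGeneric (2 * y)) :
    normVal q (2 * (m + 1) + 1) 1 y = factorOne (2 * (m + 1) + 1) y := by
  have h := normVal_condense_odd q m 1 hy
  have hroot : (-q ^ 2) ^ (m + 1) * (-q) ^ (m + 1) = 1 := by
    rw [← mul_pow, show -q ^ 2 * -q = 1 by linear_combination hq.pow_eq_one, one_pow]
  rw [sub_self, show (1 + 1 : ℤ) = 2 from rfl, he.one hy, he.one hy.two_mul_add_one,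
    he.zero (m + 1) rfl hy.two_mul_add_half, he.two_even hy.two_mul_add_half,
    ho.one hy.two_mul_add_one] at h
  have hF := factorOne_condense_odd (Int.natCast_nonneg m) y
  have hF' := factorZero_mul_factorTwo (Int.natCast_nonneg m) y
  have hX := hy.add_half_intCast_ne_zero (3 * m + 4)
  have hne := mul_ne_zero (Nat.cast_add_one_ne_zero (R := ℂ) m)
    (factorOne_ne_zero hy.two_mul_add_one (2 * m + 1))
  push_cast at h hF hF' hX
  refine mul_right_cancel₀ (mul_ne_zero hne hX) ?_
  linear_combination (y + (3 * m + 4) / 2) * h - (m + 1) * hF - (2 * y + 1) * hF' -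
    (2 * y + 1) * (y + (3 * m + 4) / 2) * (factorZero (m + 1) (y + 1 / 2) *
      factorTwo (2 * (m + 1)) (y + 1 / 2)) * hroot

lemma two_odd_succ (ho : HasClosedForms q (2 * m + 1)) (he : HasClosedForms q (2 * (m + 1)))
    (hy : IsGeneric (2 * y)) :
    normVal q (2 * (m + 1) + 1) 2 y =
      (-q) ^ (m + 1) * (1 - q) * factorTwo (2 * (m + 1) + 1) y := by
  have h := normVal_condense_odd q m 2 hy
  rw [show (2 - 1 : ℤ) = 1 from rfl, show (2 + 1 : ℤ) = 3 from rfl, he.two_even hy,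
    he.two_even hy.two_mul_add_one, he.one hy.two_mul_add_half,
    he.three_even hy.two_mul_add_half, ho.two_odd hy.two_mul_add_one] at h
  have hF := factorTwo_condense_odd (Int.natCast_nonneg m) y
  have hF' := factorOne_mul_factorThree_even (Int.natCast_nonneg m) y
  have hX := hy.add_half_intCast_ne_zero (3 * m + 4)
  have hconst := mul_ne_zero (pow_ne_zero m (neg_ne_zero.2 (hq.ne_zero three_ne_zero)))
    (sub_ne_zero.2 (hq.ne_one (by norm_num)).symm)
  have hne := mul_ne_zero (Nat.cast_add_one_ne_zero (R := ℂ) m)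
    (mul_ne_zero hconst (factorTwo_ne_zero hy.two_mul_add_one (2 * m + 1)))
  push_cast at h hF hF' hX
  refine mul_right_cancel₀ (mul_ne_zero hne hX) ?_
  linear_combination (y + (3 * m + 4) / 2) * h +
    (-q) ^ (2 * m) * ((m + 1) * q * (1 - q) ^ 2 * hF - (2 * y + 1) * q ^ 2 * hF') +
    (-q) ^ (2 * m) * (m + 1) * q * (y + m + 3 / 2) *
      (factorTwo (2 * (m + 1)) y * factorTwo (2 * (m + 1)) (y + 1)) *
      sq_add_self_add_one_eq_zero hq

lemma three_odd_succ (ho : HasClosedForms q (2 * m + 1)) (he : HasClosedForms q (2 * (m + 1)))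
    (hy : IsGeneric (2 * y)) :
    normVal q (2 * (m + 1) + 1) 3 y =
      (-q) ^ (2 * (m + 1) + 1) * 2 * factorThree (2 * (m + 1) + 1) y := by
  have h := normVal_condense_odd q m 3 hy
  rw [show (3 - 1 : ℤ) = 2 from rfl, show (3 + 1 : ℤ) = 4 from rfl,
    normVal_four hq _ hy.two_mul_add_half, he.three_even hy, he.three_even hy.two_mul_add_one,
    he.two_even hy.two_mul_add_half, ho.three_odd hy.two_mul_add_one] at h
  have hF := factorThree_condense_odd (Int.natCast_nonneg m) y
  have hF' := factorTwo_sq_even (Int.natCast_nonneg m) y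
  have hZ : y + 3 * m + 7 / 2 ≠ 0 := fun h0 =>
    hy.add_half_intCast_ne_zero (6 * m + 7) (by push_cast; linear_combination h0)
  have hconst := mul_ne_zero (pow_ne_zero (2 * m + 1) (neg_ne_zero.2 (hq.ne_zero three_ne_zero)))
    two_ne_zero
  have hne := mul_ne_zero (Nat.cast_add_one_ne_zero (R := ℂ) m)
    (mul_ne_zero hconst (factorThree_ne_zero hy.two_mul_add_one (2 * m + 1)))
  push_cast at h hF hF'
  refine mul_right_cancel₀ (mul_ne_zero hne hZ) ?_
  linear_combination (y + 3 * m + 7 / 2) * h -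
    (-q) ^ (4 * m + 4) * (4 * (m + 1) * hF + (2 * y + 1) * hF')

lemma succ_even (he : HasClosedForms q (2 * m)) (ho : HasClosedForms q (2 * m + 1)) :
    HasClosedForms q (2 * (m + 1)) where
  zero l hl y hy := by
    obtain rfl : m + 1 = l := by omega
    simpa using zero_even_succ hq he ho hy
  one y hy := by simpa using one_even_succ hq he ho hy
  two y hy := by simpa using two_even_succ hq he ho hy
  three y hy := by simpa using three_even_succ hq he ho hy

lemma succ_odd (ho : HasClosedForms q (2 * m + 1)) (he : HasClosedForms q (2 * (m + 1))) :
    HasClosedForms q (2 * (m + 1) + 1) where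
  zero l hl := by omega
  one y hy := by simpa using one_odd_succ hq ho he hy
  two y hy := by simpa [Nat.mul_add_div] using two_odd_succ hq ho he hy
  three y hy := by simpa [Nat.mul_add_mod] using three_odd_succ hq ho he hy

lemma size_one : HasClosedForms q 1 := by
  have h1 : aF ℂ q 1 = 1 := by simp [aF]
  have h2 : aF ℂ q 2 = 1 - q := by simp [aF, sum_range_succ, sub_eq_add_neg]
  have h3 : aF ℂ q 3 = -q * 2 := by
    simp only [aF, Int.reduceToNat, sum_range_succ]
    norm_num
    linear_combination sq_add_self_add_one_eq_zero hq
  constructor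
  · omega
  all_goals
    simp [normVal, scale, prodFact1, dVal_one, h1, h2, h3, factorOne, factorTwo, factorThree,
      tower_of_nonpos]

end HasClosedForms

theorem hasClosedForms {q : ℂ} (hq : IsPrimitiveRoot q 3) (n : ℕ) : HasClosedForms q n := by
  have pair (m : ℕ) : HasClosedForms q (2 * m) ∧ HasClosedForms q (2 * m + 1) := by
    induction m with
    | zero => exact ⟨.size_zero, .size_one hq⟩
    | succ m ih => exact ⟨.succ_even hq ih.1 ih.2, .succ_odd hq ih.2 (.succ_even hq ih.1 ih.2)⟩
  obtain ⟨m, rfl | rfl⟩ := n.even_or_odd'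
  exacts [(pair m).1, (pair m).2]

end ClosedForms

section Evaluation

lemma infinite_setOf_isGeneric {F : Type*} [Field F] [CharZero F] :
    {x : F | IsGeneric x}.Infinite := by
  refine Set.infinite_of_injective_forall_mem (f := fun n : ℕ => (n + 1 / 2 : F))
    (fun a b h => Nat.cast_injective (add_right_cancel h)) fun n a h => ?_
  have h2 : ((2 * n + 1 : ℤ) : F) = (2 * a : ℤ) := by
    push_cast
    linear_combination 2 * h
  have := Int.cast_injective h2
  omega

lemma eq_of_eval_two_mul_eq {F : Type*} [Field F] [CharZero F] {P Q : F[X]}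
    (h : ∀ y, IsGeneric (2 * y) → P.eval (2 * y) = Q.eval (2 * y)) : P = Q := by
  refine eq_of_infinite_eval_eq P Q (infinite_setOf_isGeneric.mono fun x hx => ?_)
  have h2 : 2 * (x / 2) = x := by ring
  simpa only [h2, Set.mem_ofPred_eq] using h (x / 2) (by rwa [h2])

variable {q : ℂ}

lemma eval_poch (c y : ℂ) (m : ℤ) :
    (poch (halfX + C c) m).eval (2 * y) = risingFact (y + c) m := by
  rw [poch, risingFact, eval_prod]
  refine prod_congr rfl fun t _ => ?_
  simp [halfX]

lemma eval_prod_poch {n : ℕ} {f : ℕ → ℂ} {e : ℕ → ℤ} (s c y : ℂ) (m : ℤ)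
    (hf : ∀ i : ℕ, f i = c + s * i) (he : ∀ i : ℕ, e i = m - 2 * i) (hm : m ≤ 2 * n) :
    (∏ i ∈ range n, poch (halfX + C (f i)) (e i)).eval (2 * y) = tower s m (y + c) := by
  simp only [eval_prod, eval_poch, tower_eq_prod_range s (y + c) hm, hf, he, add_assoc]

lemma three_zpow_neg_mul_pow (hq : IsPrimitiveRoot q 3) (n : ℕ) :
    (3 : ℂ) ^ (-((n / 2 : ℕ) : ℤ)) * (1 - q) ^ n = (-q) ^ (n / 2) * (1 - q) ^ (n % 2) := by
  have hsq : (1 - q) ^ 2 = 3 * -q := by linear_combination sq_add_self_add_one_eq_zero hq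
  nth_rw 2 [← Nat.div_add_mod n 2]
  rw [pow_add, pow_mul, hsq, mul_pow, zpow_neg, zpow_natCast]
  field_simp

lemma dF_six_mul_add_one (hq : IsPrimitiveRoot q 3) (k : ℤ) (n : ℕ) :
    dF ℂ n (6 * k + 1) q =
      C ((2 : ℂ) ^ (n / 2 * ((n + 1) / 2)) * prodFact1 n) *
      (∏ i ∈ range n,
        poch (halfX + C (3 * (i : ℂ) + 1)) (((n : ℤ) - 4 * i) / 2) *
        poch (halfX + C (3 * (i : ℂ) + 3)) (((n : ℤ) - 4 * i - 3) / 2)) *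
      (∏ i ∈ range n,
        poch (halfX + C ((n : ℂ) - i + 1 / 2)) (((n : ℤ) - 4 * i - 1) / 2) *
        poch (halfX + C ((n : ℂ) - i - 1 / 2)) (((n : ℤ) - 4 * i - 2) / 2)) := by
  refine eq_of_eval_two_mul_eq fun y hy => ?_
  rw [dF_six_mul_add hq, eval_dF, dVal_two_mul, (hasClosedForms hq n).one hy, factorOne, scale,
    prod_mul_distrib, prod_mul_distrib, eval_mul, eval_mul, eval_mul, eval_mul, eval_C,
    eval_prod_poch 3 1 y (n / 2), eval_prod_poch 3 3 y ((n - 3) / 2),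
    eval_prod_poch (-1) (n + 1 / 2) y ((n - 1) / 2),
    eval_prod_poch (-1) (n - 1 / 2) y ((n - 2) / 2)]
  · push_cast
    ring_nf
  all_goals first | omega | intro i; first | omega | ring

lemma dF_six_mul_add_two (hq : IsPrimitiveRoot q 3) (k : ℤ) (n : ℕ) :
    dF ℂ n (6 * k + 2) q =
      C ((2 : ℂ) ^ (n / 2 * ((n + 1) / 2)) * (3 : ℂ) ^ (-((n / 2 : ℕ) : ℤ)) *
          (1 - q) ^ n * prodFact1 n) *
      (∏ i ∈ range n,
        poch (halfX + C ((n : ℂ) - i)) (((n : ℤ) - 4 * i) / 2) *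
        poch (halfX + C ((n : ℂ) - i)) (((n : ℤ) - 4 * i - 3) / 2)) *
      (∏ i ∈ range n,
        poch (halfX + C (3 * (i : ℂ) + 3 / 2)) (((n : ℤ) - 4 * i - 1) / 2) *
        poch (halfX + C (3 * (i : ℂ) + 5 / 2)) (((n : ℤ) - 4 * i - 2) / 2)) := by
  refine eq_of_eval_two_mul_eq fun y hy => ?_
  rw [dF_six_mul_add hq, eval_dF, dVal_two_mul, (hasClosedForms hq n).two hy, factorTwo, scale,
    ← three_zpow_neg_mul_pow hq,
    prod_mul_distrib, prod_mul_distrib, eval_mul, eval_mul, eval_mul, eval_mul, eval_C,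
    eval_prod_poch (-1) n y (n / 2), eval_prod_poch (-1) n y ((n - 3) / 2),
    eval_prod_poch 3 (3 / 2) y ((n - 1) / 2), eval_prod_poch 3 (5 / 2) y ((n - 2) / 2)]
  · push_cast
    ring
  all_goals first | omega | intro i; first | omega | ring

lemma dF_six_mul_add_three (hq : IsPrimitiveRoot q 3) (k : ℤ) {n : ℕ} (hn : 1 ≤ n) :
    dF ℂ n (6 * k + 3) q =
      C ((-q) ^ n * (2 : ℂ) ^ ((n + 1) / 2 * ((n + 2) / 2) - n / 2) * prodFact1 n) *
      (∏ i ∈ range n,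
        poch (halfX + C (3 * (i : ℂ) + 2)) (((n : ℤ) - 4 * i - 1) / 2) *
        poch (halfX + C (3 * (i : ℂ) + 2)) (((n : ℤ) - 4 * i - 2) / 2)) *
      (∏ i ∈ range n,
        poch (halfX + C (2 * ((n / 2 : ℕ) : ℂ) - i + 1 / 2)) (((n : ℤ) - 4 * i) / 2) *
        poch (halfX + C (2 * (((n - 1) / 2 : ℕ) : ℂ) - i + 3 / 2))
          (((n : ℤ) - 4 * i - 3) / 2)) := by
  have hexp : (n + 1) / 2 * ((n + 2) / 2) - n / 2 = n / 2 * ((n + 1) / 2) + n % 2 := by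
    rw [show (n + 2) / 2 = n / 2 + 1 by omega, mul_add_one, mul_comm (n / 2)]
    omega
  have hcast : (((n : ℤ) / 2 : ℤ) : ℂ) = (n / 2 : ℕ) := by norm_cast
  have hcast' : ((((n : ℤ) - 1) / 2 : ℤ) : ℂ) = ((n - 1) / 2 : ℕ) := by
    rw [← Int.cast_natCast ((n - 1) / 2), Int.natCast_div, Nat.cast_sub hn, Nat.cast_one,
      Nat.cast_ofNat]
  refine eq_of_eval_two_mul_eq fun y hy => ?_
  rw [dF_six_mul_add hq, eval_dF, dVal_two_mul, (hasClosedForms hq n).three hy, factorThree, scale,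
    hexp, hcast, hcast', pow_add, prod_mul_distrib, prod_mul_distrib, eval_mul, eval_mul, eval_mul,
    eval_mul, eval_C, eval_prod_poch 3 2 y ((n - 1) / 2), eval_prod_poch 3 2 y ((n - 2) / 2),
    eval_prod_poch (-1) (2 * (n / 2 : ℕ) + 1 / 2) y (n / 2),
    eval_prod_poch (-1) (2 * ((n - 1) / 2 : ℕ) + 3 / 2) y ((n - 3) / 2)]
  · ring_nf
  all_goals first | omega | intro i; first | omega | ring

lemma dF_six_mul_add_four (hq : IsPrimitiveRoot q 3) (k : ℤ) (n : ℕ) :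
    dF ℂ n (6 * k + 4) q = C ((-q ^ 2) ^ (-(n : ℤ))) * dF ℂ n (6 * k + 2) q := by
  refine eq_of_eval_two_mul_eq fun y hy => ?_
  have hinv : (-q ^ 2)⁻¹ = -q := inv_eq_of_mul_eq_one_right (by linear_combination hq.pow_eq_one)
  rw [dF_six_mul_add hq, dF_six_mul_add hq, eval_mul, eval_C, eval_dF, eval_dF, dVal_four hq n hy,
    zpow_neg, zpow_natCast, ← inv_pow, hinv]

lemma dF_six_mul_add_five (hq : IsPrimitiveRoot q 3) (k : ℤ) (n : ℕ) :
    dF ℂ n (6 * k + 5) q = C (q ^ (-(n : ℤ))) * dF ℂ n (6 * k + 1) q := by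
  refine eq_of_eval_two_mul_eq fun y hy => ?_
  have hinv : q⁻¹ = q ^ 2 := inv_eq_of_mul_eq_one_right (by linear_combination hq.pow_eq_one)
  rw [dF_six_mul_add hq, dF_six_mul_add hq, eval_mul, eval_C, eval_dF, eval_dF, dVal_five hq n hy,
    zpow_neg, zpow_natCast, ← inv_pow, hinv]

lemma dF_odd_six_mul (hq : IsPrimitiveRoot q 3) (k : ℤ) (n : ℕ) :
    dF ℂ (2 * n + 1) (6 * k) q = 0 := by
  refine eq_of_eval_two_mul_eq fun y hy => ?_
  rw [← add_zero (6 * k), dF_six_mul_add hq, eval_dF, dVal_zero_odd hq ⟨n, rfl⟩ hy, eval_zero]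

lemma dF_even_six_mul (hq : IsPrimitiveRoot q 3) (k : ℤ) (n : ℕ) :
    dF ℂ (2 * n) (6 * k) q =
      C ((-q ^ 2 : ℂ) ^ n * (2 : ℂ) ^ (n ^ 2) *
          ∏ i ∈ range n, (i.factorial : ℂ) / ((2 * n - 1 - i).factorial : ℂ)) *
      ∏ i ∈ range n,
        poch (halfX + C (3 * (i : ℂ) + 1 / 2)) ((n : ℤ) - 2 * i) *
        poch (halfX + C (3 * (i : ℂ) + 7 / 2)) ((n : ℤ) - 2 * (i + 1)) *
        (poch (halfX + C (2 * (n : ℂ) - i)) ((n : ℤ) - 2 * i - 1)) ^ 2 := by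
  refine eq_of_eval_two_mul_eq fun y hy => ?_
  rw [← add_zero (6 * k), dF_six_mul_add hq, eval_dF, dVal_two_mul,
    (hasClosedForms hq (2 * n)).zero n rfl hy, factorZero, scale, prodFact1,
    show (2 * n + 1) / 2 = n by omega, show 2 * n / 2 = n by omega,
    prod_mul_distrib, prod_mul_distrib, prod_pow, eval_mul, eval_mul, eval_mul, eval_pow, eval_C,
    eval_prod_poch 3 (1 / 2) y n, eval_prod_poch 3 (7 / 2) y (n - 2),
    eval_prod_poch (-1) (2 * n) y (n - 1)]
  · push_cast
    ring
  all_goals first | omega | intro i; first | omega | ring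

end Evaluation

/-- the evaluations of d_{n,k}(x,q) for q a primitive third root of unity,
with q^{1/2} := -q².  All products over i ≥ 0 are truncated at i = n, beyond which every
factor equals 1. -/
theorem statement11 (q : ℂ) (hq : IsPrimitiveRoot q 3) (k : ℤ) (n : ℕ) (hn : 1 ≤ n) :
    (dF ℂ n (6 * k + 1) q =
      Polynomial.C ((2 : ℂ) ^ (n / 2 * ((n + 1) / 2)) * prodFact1 n) *
      (∏ i ∈ Finset.range n,
        poch (halfX + Polynomial.C (3 * (i : ℂ) + 1)) (((n : ℤ) - 4 * i) / 2) *
        poch (halfX + Polynomial.C (3 * (i : ℂ) + 3)) (((n : ℤ) - 4 * i - 3) / 2)) *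
      (∏ i ∈ Finset.range n,
        poch (halfX + Polynomial.C ((n : ℂ) - i + 1 / 2)) (((n : ℤ) - 4 * i - 1) / 2) *
        poch (halfX + Polynomial.C ((n : ℂ) - i - 1 / 2)) (((n : ℤ) - 4 * i - 2) / 2))) ∧
    (dF ℂ n (6 * k + 2) q =
      Polynomial.C ((2 : ℂ) ^ (n / 2 * ((n + 1) / 2)) * (3 : ℂ) ^ (-((n / 2 : ℕ) : ℤ)) *
          (1 - q) ^ n * prodFact1 n) *
      (∏ i ∈ Finset.range n,
        poch (halfX + Polynomial.C ((n : ℂ) - i)) (((n : ℤ) - 4 * i) / 2) *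
        poch (halfX + Polynomial.C ((n : ℂ) - i)) (((n : ℤ) - 4 * i - 3) / 2)) *
      (∏ i ∈ Finset.range n,
        poch (halfX + Polynomial.C (3 * (i : ℂ) + 3 / 2)) (((n : ℤ) - 4 * i - 1) / 2) *
        poch (halfX + Polynomial.C (3 * (i : ℂ) + 5 / 2)) (((n : ℤ) - 4 * i - 2) / 2))) ∧
    (dF ℂ n (6 * k + 3) q =
      Polynomial.C ((-q) ^ n * (2 : ℂ) ^ ((n + 1) / 2 * ((n + 2) / 2) - n / 2) * prodFact1 n) *
      (∏ i ∈ Finset.range n,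
        poch (halfX + Polynomial.C (3 * (i : ℂ) + 2)) (((n : ℤ) - 4 * i - 1) / 2) *
        poch (halfX + Polynomial.C (3 * (i : ℂ) + 2)) (((n : ℤ) - 4 * i - 2) / 2)) *
      (∏ i ∈ Finset.range n,
        poch (halfX + Polynomial.C (2 * ((n / 2 : ℕ) : ℂ) - i + 1 / 2)) (((n : ℤ) - 4 * i) / 2) *
        poch (halfX + Polynomial.C (2 * (((n - 1) / 2 : ℕ) : ℂ) - i + 3 / 2))
          (((n : ℤ) - 4 * i - 3) / 2))) ∧
    (dF ℂ n (6 * k + 4) q = Polynomial.C ((-q ^ 2 : ℂ) ^ (-(n : ℤ))) * dF ℂ n (6 * k + 2) q) ∧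
    (dF ℂ n (6 * k + 5) q = Polynomial.C (q ^ (-(n : ℤ))) * dF ℂ n (6 * k + 1) q) ∧
    (dF ℂ (2 * n + 1) (6 * k) q = 0) ∧
    (dF ℂ (2 * n) (6 * k) q =
      Polynomial.C ((-q ^ 2 : ℂ) ^ n * (2 : ℂ) ^ (n ^ 2) *
          ∏ i ∈ Finset.range n, (i.factorial : ℂ) / ((2 * n - 1 - i).factorial : ℂ)) *
      ∏ i ∈ Finset.range n,
        poch (halfX + Polynomial.C (3 * (i : ℂ) + 1 / 2)) ((n : ℤ) - 2 * i) *
        poch (halfX + Polynomial.C (3 * (i : ℂ) + 7 / 2)) ((n : ℤ) - 2 * (i + 1)) *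
        (poch (halfX + Polynomial.C (2 * (n : ℂ) - i)) ((n : ℤ) - 2 * i - 1)) ^ 2) := by
  exact ⟨dF_six_mul_add_one hq k n, dF_six_mul_add_two hq k n, dF_six_mul_add_three hq k hn,
    dF_six_mul_add_four hq k n, dF_six_mul_add_five hq k n, dF_odd_six_mul hq k n,
    dF_even_six_mul hq k n⟩

end
end

section
/- The number of alternating sign matrices of size n equals ∏_{i=0}^{n−1} (3i+1)!/(n+i)!. -/
open Finset

noncomputable section

/-- A matrix is an alternating sign matrix: entries in {-1,0,1}, all row and column sums 1,
and all partial row and column sums (from the start) equal to 0 or 1. -/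
def IsASM {n : ℕ} (A : Matrix (Fin n) (Fin n) ℤ) : Prop :=
  (∀ i j, A i j = -1 ∨ A i j = 0 ∨ A i j = 1) ∧
  (∀ i, ∑ j, A i j = 1) ∧
  (∀ j, ∑ i, A i j = 1) ∧
  (∀ i j, (∑ j' ∈ Finset.Iic j, A i j') = 0 ∨ (∑ j' ∈ Finset.Iic j, A i j') = 1) ∧
  (∀ i j, (∑ i' ∈ Finset.Iic i, A i' j) = 0 ∨ (∑ i' ∈ Finset.Iic i, A i' j) = 1)

open scoped Classical in
/-- The (finite) set of all alternating sign matrices of size n; since every ASM has entries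
in {-1,0,1}, it occurs in the image below. -/
noncomputable def asmFinset (n : ℕ) : Finset (Matrix (Fin n) (Fin n) ℤ) :=
  ((Finset.univ : Finset (Matrix (Fin n) (Fin n) (Fin 3))).image
    (fun B => Matrix.of fun i j => ((B i j : ℕ) : ℤ) - 1)).filter (fun A => IsASM A)

/-- μ(A): the number of entries of A equal to -1. -/
def asmMu {n : ℕ} (A : Matrix (Fin n) (Fin n) ℤ) : ℕ :=
  (Finset.univ.filter (fun p : Fin n × Fin n => A p.1 p.2 = -1)).card

/-- The Q-enumeration A_n(Q) = ∑_A Q^{μ(A)} of alternating sign matrices of size n. -/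
noncomputable def asmEnum {S : Type*} [CommRing S] (n : ℕ) (Q : S) : S :=
  ∑ A ∈ asmFinset n, Q ^ asmMu A

/-!
The vectors of partial column sums of an alternating sign matrix are the rows of vertical states in
a configuration of the six-vertex model with domain wall boundary, so the partition function of that
model, with all weights equal, counts the matrices. Give row `i` a parameter `xᵢ` and column `j` a
parameter `yⱼ`, and let the crossing parameter be a primitive cube root of unity `ω`. By the
Yang–Baxter equation the transfer matrices of the rows commute, so the partition function is
symmetric in `x`. At `y₀ = ω x₀` the state of the corner is forced and the partition function of
size `n + 1` reduces to that of size `n`. As a polynomial in `y₀` its degree is at most `n`.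

The quotient of the alternant with exponents `0, 1, 3, 4, 6, 7, …` by the Vandermonde determinant,
both in the `2 * n` variables `xᵢ` and `yⱼ`, obeys the same recursion at `ω ^ 3 = 1`. Multiplied by
the Vandermonde determinant, the difference of the two sides has, in `y₀`, more roots than its
degree allows: the other variables and the `ω xᵢ`. Hence the partition function is this Schur
polynomial up to an explicit factor (Okada, Stroganov). Specializing the variables to `1, t, t², …`
turns both alternants into Vandermonde determinants in powers of `t`, and at `t = 1` their quotient
becomes a product of factorials.
-/

open Polynomial
open scoped Kronecker

theorem sq_add_self_add_one_eq_zero_s12 {R : Type*} [CommRing R] [IsDomain R] {ω : R}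
    (hω : IsPrimitiveRoot ω 3) : ω ^ 2 + ω + 1 = 0 := by
  have h := hω.geom_sum_eq_zero (by norm_num)
  simp only [sum_range_succ, sum_range_zero] at h
  linear_combination h

section YangBaxter

variable {R : Type*} [CommRing R]

/-- The weight of a vertex of the six-vertex model in a row and a column with spectral parameters
`x` and `y`. Here `h` and `v` are the states of the edges entering the vertex from the left and from
above, `h'` and `v'` those of the edges leaving it to the right and downwards; `true` marks an edge
on a path. The crossing parameter of the model is built into `ω`, which will be a primitive cube
root of unity. -/
def vertexWeight (ω x y : R) (h v h' v' : Bool) : R :=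
  match h, v, h', v' with
  | false, false, false, false => ω * x - y
  | true, true, true, true => ω * x - y
  | false, true, false, true => ω * y - x
  | true, false, true, false => ω * y - x
  | false, false, true, true => (ω - 1) * x
  | true, true, false, false => (ω - 1) * y
  | _, _, _, _ => 0

/-- The transition matrix of the horizontal state at a vertex whose vertical edges are in the states
`v` and `v'`. -/
def vertexMatrix (ω x y : R) (v v' : Bool) : Matrix Bool Bool R :=
  Matrix.of fun h h' => vertexWeight ω x y h v h' v'

/-- The weights with which two rows with parameters `x₁` and `x₂` cross each other (the R-matrix),
as a matrix from the pair of horizontal states before the crossing to the pair after it. -/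
def crossingMatrix (ω x₁ x₂ : R) : Matrix (Bool × Bool) (Bool × Bool) R :=
  Matrix.of fun
    | (false, false), (false, false) => ω * x₁ - x₂
    | (true, true), (true, true) => ω * x₁ - x₂
    | (false, true), (false, true) => (ω - 1) * x₂
    | (true, false), (true, false) => (ω - 1) * x₁
    | (false, true), (true, false) => (1 + ω) * (x₁ - x₂)
    | (true, false), (false, true) => (1 + ω) * (x₁ - x₂)
    | _, _ => 0

theorem yang_baxter {ω : R} (hω : ω ^ 2 + ω + 1 = 0) (x₁ x₂ y : R) (v v' : Bool) :
    SemiconjBy (crossingMatrix ω x₁ x₂)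
      (∑ u, vertexMatrix ω x₁ y v u ⊗ₖ vertexMatrix ω x₂ y u v')
      (∑ u, vertexMatrix ω x₂ y v u ⊗ₖ vertexMatrix ω x₁ y u v') := by
  ext ⟨h₁, h₂⟩ ⟨k₁, k₂⟩
  simp only [Matrix.mul_apply, Fintype.sum_prod_type, Fintype.sum_bool, Matrix.add_apply,
    Matrix.kroneckerMap_apply, vertexMatrix, crossingMatrix, Matrix.of_apply]
  cases h₁ <;> cases h₂ <;> cases v <;> cases v' <;> cases k₁ <;> cases k₂ <;>
    simp only [vertexWeight, mul_zero, zero_mul, add_zero, zero_add] <;> grind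

/-- The transition matrix of the horizontal state along a row of `n` vertices, `s` and `t` being the
states of the vertical edges above and below the row. -/
def monodromyMatrix (ω x : R) {n : ℕ} (y : Fin n → R) (s t : Fin n → Bool) : Matrix Bool Bool R :=
  (List.ofFn fun j => vertexMatrix ω x (y j) (s j) (t j)).prod

theorem monodromyMatrix_succ (ω x : R) {n : ℕ} (y : Fin (n + 1) → R) (s t : Fin (n + 1) → Bool) :
    monodromyMatrix ω x y s t = vertexMatrix ω x (y 0) (s 0) (t 0) *
      monodromyMatrix ω x (Fin.tail y) (Fin.tail s) (Fin.tail t) := by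
  rw [monodromyMatrix, List.ofFn_succ, List.prod_cons]
  rfl

theorem sum_fin_succ_arrow {α M : Type*} [Fintype α] [AddCommMonoid M] {n : ℕ}
    (f : (Fin (n + 1) → α) → M) : ∑ s, f s = ∑ a, ∑ s : Fin n → α, f (Fin.cons a s) := by
  rw [← Fintype.sum_prod_type']
  exact (Fintype.sum_equiv (Fin.consEquiv fun _ => α) _ _ fun _ => rfl).symm

theorem sum_monodromyMatrix_kronecker_succ (ω x₁ x₂ : R) {n : ℕ} (y : Fin (n + 1) → R)
    (s t : Fin (n + 1) → Bool) :
    ∑ u, monodromyMatrix ω x₁ y s u ⊗ₖ monodromyMatrix ω x₂ y u t =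
      (∑ u, vertexMatrix ω x₁ (y 0) (s 0) u ⊗ₖ vertexMatrix ω x₂ (y 0) u (t 0)) *
        ∑ u, monodromyMatrix ω x₁ (Fin.tail y) (Fin.tail s) u ⊗ₖ
          monodromyMatrix ω x₂ (Fin.tail y) u (Fin.tail t) := by
  simp only [sum_fin_succ_arrow, monodromyMatrix_succ, Fin.cons_zero, Fin.tail_cons, sum_mul_sum,
    Matrix.mul_kronecker_mul]

/-- The Yang–Baxter equation pulls the crossing of two rows through all columns. -/
theorem semiconjBy_crossingMatrix {ω : R} (hω : ω ^ 2 + ω + 1 = 0) (x₁ x₂ : R) {n : ℕ}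
    (y : Fin n → R) (s t : Fin n → Bool) :
    SemiconjBy (crossingMatrix ω x₁ x₂)
      (∑ u, monodromyMatrix ω x₁ y s u ⊗ₖ monodromyMatrix ω x₂ y u t)
      (∑ u, monodromyMatrix ω x₂ y s u ⊗ₖ monodromyMatrix ω x₁ y u t) := by
  induction n with
  | zero => simp [monodromyMatrix]
  | succ n ih =>
    simp only [sum_monodromyMatrix_kronecker_succ]
    exact (yang_baxter hω x₁ x₂ (y 0) (s 0) (t 0)).mul_right (ih _ _ _)

/-- The row-to-row transfer matrix with domain wall boundary: the row is entered in the state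
`false` and left in the state `true`. -/
def transferMatrix (ω : R) {n : ℕ} (y : Fin n → R) (x : R) :
    Matrix (Fin n → Bool) (Fin n → Bool) R :=
  Matrix.of fun s t => monodromyMatrix ω x y s t false true

theorem smul_transferMatrix_mul {ω : R} (hω : ω ^ 2 + ω + 1 = 0) {n : ℕ} (y : Fin n → R)
    (x₁ x₂ : R) :
    (ω * x₁ - x₂) • (transferMatrix ω y x₁ * transferMatrix ω y x₂) =
      (ω * x₁ - x₂) • (transferMatrix ω y x₂ * transferMatrix ω y x₁) := by
  ext s t
  have h := congrFun₂ (semiconjBy_crossingMatrix hω x₁ x₂ y s t).eq (false, false) (true, true)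
  simpa [Matrix.mul_apply, Fintype.sum_prod_type, crossingMatrix, Matrix.sum_apply, transferMatrix,
    mul_comm _ (ω * x₁ - x₂)] using h

theorem transferMatrix_commute [IsDomain R] {ω : R} (hω : IsPrimitiveRoot ω 3) {n : ℕ}
    (y : Fin n → R) (x₁ x₂ : R) : Commute (transferMatrix ω y x₁) (transferMatrix ω y x₂) := by
  have hω' : ω ^ 2 + ω + 1 = 0 := sq_add_self_add_one_eq_zero_s12 hω
  by_cases h₁ : ω * x₁ - x₂ = 0
  · by_cases h₂ : ω * x₂ - x₁ = 0
    · have hω2 : ω ^ 2 - 1 ≠ 0 :=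
        sub_ne_zero.2 (hω.pow_ne_one_of_pos_of_lt two_ne_zero (by norm_num))
      have hx₁ : x₁ = 0 := (mul_eq_zero.1 (show (ω ^ 2 - 1) * x₁ = 0 by
        linear_combination ω * h₁ + h₂)).resolve_left hω2
      have hx₂ : x₂ = 0 := by simpa [hx₁] using h₁
      rw [hx₁, hx₂]
    · exact (smul_right_injective _ h₂ (smul_transferMatrix_mul hω' y x₂ x₁)).symm
  · exact smul_right_injective _ h₁ (smul_transferMatrix_mul hω' y x₁ x₂)

end YangBaxter

section PartitionFunction

variable {R : Type*} [CommRing R]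

/-- The partition function of the six-vertex model on an `n × n` grid with domain wall boundary
conditions: paths enter at the bottom of every column and leave at the right end of every row. -/
def partitionFunction (ω : R) {n : ℕ} (x y : Fin n → R) : R :=
  ((List.ofFn x).map (transferMatrix ω y)).prod (fun _ => false) (fun _ => true)

theorem partitionFunction_comp_perm [IsDomain R] {ω : R} (hω : IsPrimitiveRoot ω 3) {n : ℕ}
    (x y : Fin n → R) (σ : Equiv.Perm (Fin n)) :
    partitionFunction ω (x ∘ σ) y = partitionFunction ω x y := by
  have hperm := (σ.ofFn_comp_perm x).map (transferMatrix ω y)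
  have hcomm : ((List.ofFn (x ∘ σ)).map (transferMatrix ω y)).Pairwise Commute :=
    List.pairwise_map.2 (List.pairwise_of_forall fun _ _ => transferMatrix_commute hω y _ _)
  exact congrFun₂ (hperm.prod_eq' hcomm) _ _

theorem fun_const_eq_cons {α : Type*} (n : ℕ) (a : α) :
    (fun _ : Fin (n + 1) => a) = Fin.cons a fun _ => a :=
  (Fin.cons_self_tail fun _ : Fin (n + 1) => a).symm

section Cons

variable (ω : R) {n : ℕ} (y : Fin (n + 1) → R) (x : R) (s t : Fin n → Bool)

theorem transferMatrix_cons_false_false :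
    transferMatrix ω y x (Fin.cons false s) (Fin.cons false t) =
      (ω * x - y 0) * transferMatrix ω (Fin.tail y) x s t := by
  simp [transferMatrix, monodromyMatrix_succ, Matrix.mul_apply, vertexMatrix, vertexWeight]

theorem transferMatrix_cons_false_true :
    transferMatrix ω y x (Fin.cons false s) (Fin.cons true t) =
      (ω - 1) * x * monodromyMatrix ω x (Fin.tail y) s t true true := by
  simp [transferMatrix, monodromyMatrix_succ, Matrix.mul_apply, vertexMatrix, vertexWeight]

theorem transferMatrix_cons_true_false :
    transferMatrix ω y x (Fin.cons true s) (Fin.cons false t) = 0 := by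
  simp [transferMatrix, monodromyMatrix_succ, Matrix.mul_apply, vertexMatrix, vertexWeight]

theorem transferMatrix_cons_true_true :
    transferMatrix ω y x (Fin.cons true s) (Fin.cons true t) =
      (ω * y 0 - x) * transferMatrix ω (Fin.tail y) x s t := by
  simp [transferMatrix, monodromyMatrix_succ, Matrix.mul_apply, vertexMatrix, vertexWeight]

theorem prod_transferMatrix_cons_true (xs : List R) :
    (xs.map (transferMatrix ω y)).prod (Fin.cons true s) (Fin.cons true t) =
      (xs.map fun x => ω * y 0 - x).prod *
        (xs.map (transferMatrix ω (Fin.tail y))).prod s t := by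
  induction xs generalizing s with
  | nil => simp [Matrix.one_apply, (Fin.cons_right_injective _).eq_iff]
  | cons x xs ih =>
    simp only [List.map_cons, List.prod_cons, Matrix.mul_apply, sum_fin_succ_arrow,
      Fintype.sum_bool, transferMatrix_cons_true_false, transferMatrix_cons_true_true, zero_mul,
      sum_const_zero, add_zero, ih, mul_sum]
    exact sum_congr rfl fun u _ => by ring

end Cons

theorem monodromyMatrix_const_false (ω x : R) {n : ℕ} (y : Fin n → R) (t : Fin n → Bool) :
    monodromyMatrix ω x y (fun _ => false) t true true =
      if t = fun _ => false then ∏ j, (ω * y j - x) else 0 := by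
  induction n with
  | zero => simp [monodromyMatrix, Subsingleton.elim t fun _ => false]
  | succ n ih =>
    obtain ⟨b, u, rfl⟩ : ∃ b u, t = Fin.cons b u := ⟨_, _, (Fin.cons_self_tail t).symm⟩
    simp only [monodromyMatrix_succ, Matrix.mul_apply, fun_const_eq_cons n, Fin.tail_cons,
      Fin.cons_zero, Fintype.sum_bool, ih, Fin.cons_inj, Fin.prod_univ_succ]
    cases b <;> simp [vertexMatrix, vertexWeight, Fin.tail]

/-- When `y 0 = ω * x 0`, the corner vertex must be the one at which a path leaves to the right, and
this forces the states of all edges in the first row and column. -/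
theorem partitionFunction_succ_of_eq (ω : R) {n : ℕ} (x y : Fin (n + 1) → R)
    (hxy : y 0 = ω * x 0) :
    partitionFunction ω x y =
      (ω - 1) * x 0 * (∏ j, (ω * Fin.tail y j - x 0)) * (∏ i, (ω * y 0 - Fin.tail x i)) *
        partitionFunction ω (Fin.tail x) (Fin.tail y) := by
  have hrow (u : Fin n → Bool) : transferMatrix ω y (x 0) (fun _ => false) (Fin.cons true u) =
      if u = fun _ => false then (ω - 1) * x 0 * ∏ j, (ω * Fin.tail y j - x 0) else 0 := by
    rw [fun_const_eq_cons, transferMatrix_cons_false_true, monodromyMatrix_const_false, mul_ite,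
      mul_zero]
  have hrow' (u : Fin n → Bool) :
      transferMatrix ω y (x 0) (fun _ => false) (Fin.cons false u) = 0 := by
    rw [fun_const_eq_cons, transferMatrix_cons_false_false, hxy, sub_self, zero_mul]
  rw [partitionFunction, List.ofFn_succ, List.map_cons, List.prod_cons, Matrix.mul_apply,
    sum_fin_succ_arrow, Fintype.sum_bool, fun_const_eq_cons n true]
  simp only [hrow, hrow', zero_mul, ite_mul, sum_const_zero, add_zero, sum_ite_eq', mem_univ,
    if_true, prod_transferMatrix_cons_true, partitionFunction]
  simp only [List.map_ofFn, List.prod_ofFn, mul_assoc]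
  rfl

end PartitionFunction

section BaseChange

variable {R S : Type*} [CommRing R] [CommRing S] (f : R →+* S)

theorem map_vertexWeight (ω x y : R) (h v h' v' : Bool) :
    f (vertexWeight ω x y h v h' v') = vertexWeight (f ω) (f x) (f y) h v h' v' := by
  cases h <;> cases v <;> cases h' <;> cases v' <;> simp [vertexWeight]

theorem mapMatrix_monodromyMatrix (ω x : R) {n : ℕ} (y : Fin n → R) (s t : Fin n → Bool) :
    f.mapMatrix (monodromyMatrix ω x y s t) = monodromyMatrix (f ω) (f x) (f ∘ y) s t := by
  rw [monodromyMatrix, monodromyMatrix, map_list_prod, List.map_ofFn]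
  congr 2
  ext j h h'
  exact map_vertexWeight f ω x (y j) h (s j) h' (t j)

theorem mapMatrix_transferMatrix (ω x : R) {n : ℕ} (y : Fin n → R) :
    f.mapMatrix (transferMatrix ω y x) = transferMatrix (f ω) (f ∘ y) (f x) := by
  ext s t
  exact congrFun₂ (mapMatrix_monodromyMatrix f ω x y s t) false true

theorem mapMatrix_prod_transferMatrix (ω : R) {n : ℕ} (y : Fin n → R) (xs : List R) :
    f.mapMatrix (xs.map (transferMatrix ω y)).prod =
      ((xs.map f).map (transferMatrix (f ω) (f ∘ y))).prod := by
  simp only [map_list_prod, List.map_map, Function.comp_def, mapMatrix_transferMatrix]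

theorem map_partitionFunction (ω : R) {n : ℕ} (x y : Fin n → R) :
    f (partitionFunction ω x y) = partitionFunction (f ω) (f ∘ x) (f ∘ y) := by
  rw [partitionFunction, partitionFunction, ← List.map_ofFn, ← mapMatrix_prod_transferMatrix]
  rfl

end BaseChange

section Degree

variable {R : Type*} [CommRing R]

theorem mul_mem_degreeLT {p q : R[X]} {d e : ℕ} (hp : p ∈ degreeLE R d)
    (hq : q ∈ degreeLT R e) : p * q ∈ degreeLT R (d + e) := by
  rw [mem_degreeLE] at hp
  rw [mem_degreeLT] at hq ⊢
  calc (p * q).degree ≤ p.degree + q.degree := degree_mul_le p q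
    _ < ↑(d + e) := by
      rw [Nat.cast_add]
      exact (add_le_add_left hp _).trans_lt
        (WithBot.add_lt_add_left (WithBot.natCast_ne_bot d) hq)

theorem prod_C_mul_X_sub_C_mem_degreeLT (a : R) (xs : List R) :
    ((xs.map C).map fun p => C a * X - p).prod ∈ degreeLT R (xs.length + 1) := by
  induction xs with
  | nil => simpa [mem_degreeLT] using degree_one_le.trans_lt zero_lt_one
  | cons x xs ih =>
    rw [List.map_cons, List.map_cons, List.prod_cons, List.length_cons,
      add_comm (xs.length + 1) 1]
    exact mul_mem_degreeLT (mem_degreeLE.2 (by compute_degree!)) ih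

/-- Only the weights of the first column involve `X`, each of them at most linearly, and a column
which goes from `false` to `true` contains a vertex whose weight is free of `X`. -/
theorem prod_transferMatrix_mem_degreeLT (ω : R) {n : ℕ} (w : Fin n → R) (xs : List R)
    (s t : Fin n → Bool) :
    ((xs.map C).map (transferMatrix (C ω) (Fin.cons X (C ∘ w)))).prod (Fin.cons false s)
      (Fin.cons true t) ∈ degreeLT R xs.length := by
  induction xs generalizing s with
  | nil => simp [Fin.cons_inj]
  | cons x xs ih =>
    have hT (u : Fin n → Bool) :
        transferMatrix (C ω) (C ∘ w) (C x) s u = C (transferMatrix ω w x s u) :=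
      (congrFun₂ (mapMatrix_transferMatrix C ω x w) s u).symm
    have hM (u : Fin n → Bool) : monodromyMatrix (C ω) (C x) (C ∘ w) s u true true =
        C (monodromyMatrix ω x w s u true true) :=
      (congrFun₂ (mapMatrix_monodromyMatrix C ω x w s u) true true).symm
    have hP (u : Fin n → Bool) :
        ((xs.map C).map (transferMatrix (C ω) (C ∘ w))).prod u t =
          C ((xs.map (transferMatrix ω w)).prod u t) :=
      (congrFun₂ (mapMatrix_prod_transferMatrix C ω w xs) u t).symm
    simp only [List.map_cons, List.prod_cons, Matrix.mul_apply, sum_fin_succ_arrow,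
      Fintype.sum_bool, transferMatrix_cons_false_true, transferMatrix_cons_false_false,
      prod_transferMatrix_cons_true, Fin.tail_cons, Fin.cons_zero, List.length_cons, hT, hM, hP]
    refine add_mem (sum_mem fun u _ => ?_) (sum_mem fun u _ => ?_)
    · convert Submodule.smul_mem _ ((ω - 1) * x * monodromyMatrix ω x w s u true true *
        (xs.map (transferMatrix ω w)).prod u t) (prod_C_mul_X_sub_C_mem_degreeLT ω xs) using 1
      simp only [smul_eq_C_mul, C_mul, C_sub, C_1]
      ring
    · rw [add_comm xs.length 1]
      exact mul_mem_degreeLT (mem_degreeLE.2 (by compute_degree!)) (ih u)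

theorem partitionFunction_mem_degreeLT (ω : R) {n : ℕ} (x : Fin (n + 1) → R) (w : Fin n → R) :
    partitionFunction (C ω) (C ∘ x) (Fin.cons X (C ∘ w)) ∈ degreeLT R (n + 1) := by
  have h := prod_transferMatrix_mem_degreeLT ω w (List.ofFn x) (fun _ => false) fun _ => true
  rwa [← fun_const_eq_cons, ← fun_const_eq_cons, List.map_ofFn, List.length_ofFn] at h

end Degree

section Alternant

variable {R : Type*} [CommRing R]

/-- The alternant with exponents `f 0, …, f (m - 1)` in the variables `z`. A Schur polynomial is the
quotient of such an alternant by the one with exponents `0, …, m - 1`. -/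
def alternant {m : ℕ} (f : ℕ → ℕ) (z : Fin m → R) : R :=
  (Matrix.of fun i j : Fin m => z i ^ f j).det

theorem map_alternant {S : Type*} [CommRing S] (g : R →+* S) {m : ℕ} (f : ℕ → ℕ) (z : Fin m → R) :
    g (alternant f z) = alternant f (g ∘ z) := by
  rw [alternant, RingHom.map_det, alternant]
  congr 1
  ext i j
  simp

theorem alternant_comp_perm {m : ℕ} (f : ℕ → ℕ) (z : Fin m → R) (σ : Equiv.Perm (Fin m)) :
    alternant f (z ∘ σ) = (Equiv.Perm.sign σ : ℤ) * alternant f z :=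
  Matrix.det_permute σ (Matrix.of fun i j : Fin m => z i ^ f j)

theorem alternant_eq_zero_of_eq {m : ℕ} (f : ℕ → ℕ) {z : Fin m → R} {i j : Fin m} (hij : i ≠ j)
    (h : z i = z j) : alternant f z = 0 :=
  Matrix.det_zero_of_row_eq hij (by ext k; simp [h])

theorem alternant_mem_degreeLT {m d : ℕ} (f : ℕ → ℕ) (w : Fin m → R)
    (hf : ∀ j : Fin (m + 1), f j < d) : alternant f (Fin.cons X (C ∘ w)) ∈ degreeLT R d := by
  rw [alternant, Matrix.det_succ_row_zero]
  refine sum_mem fun j _ => ?_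
  have hX : (X : R[X]) ^ f j ∈ degreeLT R d :=
    mem_degreeLT.2 ((degree_X_pow_le _).trans_lt (by exact_mod_cast hf j))
  convert Submodule.smul_mem _ ((-1) ^ (j : ℕ) *
    (Matrix.of fun i k : Fin m => w i ^ f (j.succAbove k)).det) hX using 1
  rw [smul_eq_C_mul, C_mul, RingHom.map_det, C_pow, C_neg, C_1, mul_right_comm]
  congr 3
  ext i k
  simp

theorem alternant_id_eq_det_vandermonde {m : ℕ} (z : Fin m → R) :
    alternant id z = (Matrix.vandermonde z).det :=
  rfl

theorem alternant_id_succ {m : ℕ} (z : Fin (m + 1) → R) :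
    alternant id z = (∏ i, (Fin.tail z i - z 0)) * alternant id (Fin.tail z) := by
  simp only [alternant_id_eq_det_vandermonde, Matrix.det_vandermonde, Fin.prod_univ_succ,
    Fin.prod_Ioi_succ, Fin.tail]
  simp

/-- The natural numbers not congruent to `2` modulo `3`, in increasing order. Up to a shift, they
are the exponents of the Schur polynomial in `2 * n` variables which belongs to the partition
`(n - 1, n - 1, …, 1, 1, 0, 0)`. -/
def gapExp (j : ℕ) : ℕ := 3 * (j / 2) + j % 2

theorem gapExp_add_two (j : ℕ) : gapExp (j + 2) = gapExp j + 3 := by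
  unfold gapExp; omega

theorem det_eq_mul_det_submatrix_succ {m : ℕ} (A : Matrix (Fin (m + 1)) (Fin (m + 1)) R)
    (h : ∀ j : Fin m, A 0 j.succ = 0) : A.det = A 0 0 * (A.submatrix Fin.succ Fin.succ).det := by
  simp [Matrix.det_succ_row_zero, Fin.sum_univ_succ, h]

theorem det_eq_of_forall_col_eq_add_mul {m : Type*} [Fintype m] [LinearOrder m]
    {A B : Matrix m m R} (p : m → m) (c : m → R) (hp : ∀ j, c j ≠ 0 → p j < j)
    (h : ∀ i j, B i j = A i j + c j * A i (p j)) : B.det = A.det := by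
  set U : Matrix m m R := 1 + Matrix.of fun k j => if k = p j then c j else 0 with hU
  have hB : B = A * U := by
    ext i j
    rw [hU, mul_add, mul_one]
    simp [Matrix.mul_apply, h, mul_comm]
  have hUdet : U.det = 1 := by
    have hdiag (j : m) : U j j = 1 := by
      have : j = p j → c j = 0 := fun hj => by_contra fun hc => (hp j hc).ne' hj
      simpa [hU]
    rw [Matrix.det_of_isUpperTriangular, prod_congr rfl fun j _ => hdiag j, prod_const_one]
    intro i j (hij : j < i)
    have : i = p j → c j = 0 := fun hi => by_contra fun hc => (hp j hc).not_gt (hi ▸ hij)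
    simpa [hU, Matrix.one_apply_ne hij.ne']
  rw [hB, Matrix.det_mul, hUdet, mul_one]

/-- Subtracting `z 0` times column `0` from column `1` and `z 1 ^ 3` times column `j` from column
`j + 2` leaves only the first entry of row `0` and the first two of row `1`. -/
theorem alternant_gapExp_add_two {m : ℕ} (z : Fin (m + 2) → R) (h : z 0 ^ 3 = z 1 ^ 3) :
    alternant gapExp z = (z 1 - z 0) * (∏ i : Fin m, (z i.succ.succ ^ 3 - z 1 ^ 3)) *
      alternant gapExp fun i : Fin m => z i.succ.succ := by
  have hcol := det_eq_of_forall_col_eq_add_mul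
    (A := Matrix.of fun i j : Fin (m + 2) => z i ^ gapExp j)
    (B := Matrix.of fun i => Fin.cons 1 (Fin.cons (z i - z 0) fun j : Fin m =>
      (z i ^ 3 - z 1 ^ 3) * z i ^ gapExp j))
    (Fin.cons 0 (Fin.cons 0 fun j => j.castSucc.castSucc))
    (Fin.cons 0 (Fin.cons (-z 0) fun _ => -z 1 ^ 3))
    (fun j => by
      cases j using Fin.cases with
      | zero => simp
      | succ j => cases j using Fin.cases with
        | zero => simp
        | succ j => simp [Fin.lt_def])
    (fun i j => by
      cases j using Fin.cases with
      | zero => simp [gapExp]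
      | succ j => cases j using Fin.cases with
        | zero => simp [gapExp, sub_eq_add_neg]
        | succ j => simp [gapExp_add_two]; ring)
  rw [alternant, ← hcol, det_eq_mul_det_submatrix_succ, det_eq_mul_det_submatrix_succ,
    mul_assoc (z 1 - z 0), alternant, ← Matrix.det_mul_column]
  · simp only [Matrix.submatrix_submatrix, Matrix.submatrix_apply, Matrix.of_apply, Fin.cons_zero,
      one_mul, Fin.succ_zero_eq_one]
    rfl
  · simp
  · intro j
    cases j using Fin.cases <;> simp [h]

end Alternant

section Interpolation

variable {R : Type*} [CommRing R]

/-- The difference of the two sides of `partitionFunction_mul_alternant_id`, which expresses the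
partition function as a multiple of a Schur polynomial. The sequence `z` lists the column and row
parameters alternately. -/
def schurDefect (ω : R) (n : ℕ) (z : ℕ → R) : R :=
  partitionFunction ω (fun i : Fin n => z (2 * i + 1)) (fun i : Fin n => z (2 * i)) *
      alternant id (fun k : Fin (2 * n) => z k) -
    (∏ i ∈ range n, (ω - 1) * (-ω) ^ i) * (∏ i : Fin n, z (2 * i + 1)) *
      alternant gapExp (fun k : Fin (2 * n) => z k)

theorem map_schurDefect {S : Type*} [CommRing S] (f : R →+* S) (ω : R) (n : ℕ) (z : ℕ → R) :
    f (schurDefect ω n z) = schurDefect (f ω) n (f ∘ z) := by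
  simp only [schurDefect, map_sub, map_mul, map_partitionFunction, map_alternant, map_prod,
    map_pow, map_neg, map_one, Function.comp_def]

theorem schurDefect_eq_zero_of_eq (ω : R) {n : ℕ} {z : ℕ → R} {i j : Fin (2 * n)} (hij : i ≠ j)
    (h : z i = z j) : schurDefect ω n z = 0 := by
  have hzero (f : ℕ → ℕ) : alternant f (fun k : Fin (2 * n) => z k) = 0 :=
    alternant_eq_zero_of_eq f hij h
  simp [schurDefect, hzero]

theorem schurDefect_comp_swap [IsDomain R] {ω : R} (hω : IsPrimitiveRoot ω 3) {n : ℕ}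
    (z : ℕ → R) (i j : Fin n) :
    schurDefect ω n (z ∘ Equiv.swap (2 * i + 1 : ℕ) (2 * j + 1)) =
      (Equiv.Perm.sign (Equiv.swap i j) : ℤ) * schurDefect ω n z := by
  have hodd (k : Fin n) :
      z (Equiv.swap (2 * i + 1 : ℕ) (2 * j + 1) (2 * k + 1)) = z (2 * Equiv.swap i j k + 1) := by
    congr 1
    simp only [Equiv.swap_apply_def, Fin.ext_iff]
    split_ifs <;> omega
  have heven (k : Fin n) : z (Equiv.swap (2 * i + 1 : ℕ) (2 * j + 1) (2 * k)) = z (2 * k) := by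
    rw [Equiv.swap_apply_of_ne_of_ne] <;> omega
  have halt (f : ℕ → ℕ) :
      alternant f (fun k : Fin (2 * n) => z (Equiv.swap (2 * i + 1 : ℕ) (2 * j + 1) k)) =
        (Equiv.Perm.sign (Equiv.swap i j) : ℤ) * alternant f (fun k : Fin (2 * n) => z k) := by
    set τ : Equiv.Perm (Fin (2 * n)) :=
      Equiv.swap ⟨2 * i + 1, by omega⟩ ⟨2 * j + 1, by omega⟩ with hτ
    have hsign : Equiv.Perm.sign τ = Equiv.Perm.sign (Equiv.swap i j) := by
      simp [hτ, Equiv.Perm.sign_swap', Fin.ext_iff]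
    rw [← hsign, ← alternant_comp_perm]
    congr 1
    ext1 k
    rw [Function.comp_apply]
    congr 1
    simp only [hτ, Equiv.swap_apply_def, Fin.ext_iff]
    split_ifs <;> rfl
  have hZ := partitionFunction_comp_perm hω (fun k : Fin n => z (2 * k + 1))
    (fun k : Fin n => z (2 * k)) (Equiv.swap i j)
  have hprod := Equiv.prod_comp (Equiv.swap i j) fun k : Fin n => z (2 * k + 1)
  simp only [schurDefect, Function.comp_apply, hodd, heven, halt, hprod]
  rw [← hZ, Function.comp_def]
  ring

theorem prod_fin_two_mul {M : Type*} [CommMonoid M] (n : ℕ) (f : ℕ → M) :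
    ∏ k : Fin (2 * n), f k = ∏ i : Fin n, f (2 * i) * f (2 * i + 1) := by
  induction n with
  | zero => simp
  | succ n ih =>
    rw [Fin.prod_univ_castSucc (n := n)]
    exact (Fin.prod_univ_castSucc (n := 2 * n + 1) _).trans <| by
      rw [Fin.prod_univ_castSucc, mul_assoc]
      exact congrArg₂ (· * ·) ih rfl

theorem partitionFunction_factor_eq {ω : R} (hω : ω ^ 3 = 1) (n : ℕ) (a : R) (z : ℕ → R) :
    (∏ i : Fin n, (ω * z (2 * i) - a)) * (∏ i : Fin n, (ω * (ω * a) - z (2 * i + 1))) =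
      (-ω) ^ n * ∏ k : Fin (2 * n), (z k - ω ^ 2 * a) := by
  rw [prod_fin_two_mul n fun k => z k - ω ^ 2 * a, ← Fin.prod_const, ← prod_mul_distrib,
    ← prod_mul_distrib]
  exact prod_congr rfl fun i _ => by
    linear_combination (-a * z (2 * i + 1) + ω ^ 2 * a ^ 2) * hω

theorem schurDefect_succ {ω : R} (hω : ω ^ 2 + ω + 1 = 0) (n : ℕ) {z : ℕ → R}
    (hz : z 0 = ω * z 1) :
    schurDefect ω (n + 1) z =
      (ω - 1) * z 1 * (-ω) ^ n * (z 1 - z 0) * (∏ k : Fin (2 * n), (z (k + 2) ^ 3 - z 1 ^ 3)) *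
        schurDefect ω n fun k => z (k + 2) := by
  have hω3 : ω ^ 3 = 1 := by linear_combination (ω - 1) * hω
  have hZ := partitionFunction_factor_eq hω3 n (z 1) fun k => z (k + 2)
  have hcube (k : ℕ) : z (k + 2) ^ 3 - z 1 ^ 3 =
      (z (k + 2) - ω ^ 2 * z 1) * ((z (k + 2) - z 0) * (z (k + 2) - z 1)) := by
    rw [hz]
    linear_combination (z (k + 2) ^ 2 * z 1 - z (k + 2) * z 1 ^ 2 * ω) * hω + z 1 ^ 3 * hω3
  have hid : alternant id (fun k : Fin (2 * (n + 1)) => z k) = (z 1 - z 0) *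
      (∏ k : Fin (2 * n), (z (k + 2) - z 0)) * (∏ k : Fin (2 * n), (z (k + 2) - z 1)) *
      alternant id fun k : Fin (2 * n) => z (k + 2) := by
    refine (alternant_id_succ (m := 2 * n + 1) fun k => z k).trans ?_
    rw [alternant_id_succ, Fin.prod_univ_succ, ← mul_assoc]
    rfl
  have hgap : alternant gapExp (fun k : Fin (2 * (n + 1)) => z k) = (z 1 - z 0) *
      (∏ k : Fin (2 * n), (z (k + 2) ^ 3 - z 1 ^ 3)) *
      alternant gapExp fun k : Fin (2 * n) => z (k + 2) :=
    alternant_gapExp_add_two (fun k : Fin (2 * n + 2) => z k)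
      (show z 0 ^ 3 = z 1 ^ 3 by rw [hz, mul_pow, hω3, one_mul])
  have hZ' : partitionFunction ω (fun i : Fin (n + 1) => z (2 * i + 1))
      (fun i : Fin (n + 1) => z (2 * i)) = (ω - 1) * z 1 *
      ((-ω) ^ n * ∏ k : Fin (2 * n), (z (k + 2) - ω ^ 2 * z 1)) *
      partitionFunction ω (fun i : Fin n => z (2 * i + 1 + 2))
        (fun i : Fin n => z (2 * i + 2)) := by
    rw [← hZ, partitionFunction_succ_of_eq _ _ _ hz, ← hz, ← mul_assoc]
    rfl
  rw [schurDefect, schurDefect, hid, hgap, hZ', prod_range_succ, Fin.prod_univ_succ]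
  simp only [hcube, prod_mul_distrib, Fin.val_zero, Fin.val_succ, mul_add, mul_one, mul_zero,
    zero_add, add_right_comm _ 2 1]
  ring

theorem schurDefect_mem_degreeLT (ω : R) (n : ℕ) (z : ℕ → R) :
    schurDefect (C ω) (n + 1) (Function.update (C ∘ z) 0 X) ∈ degreeLT R (3 * n + 2) := by
  have hcol : (fun i : Fin (n + 1) => Function.update (C ∘ z) 0 X (2 * i)) =
      Fin.cons X (C ∘ fun i : Fin n => z (2 * i + 2)) := by
    ext1 i
    cases i using Fin.cases <;> simp [mul_add]
  have hvar : (fun k : Fin (2 * n + 2) => Function.update (C ∘ z) 0 X k) =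
      Fin.cons X (C ∘ fun k : Fin (2 * n + 1) => z (k + 1)) := by
    ext1 k
    cases k using Fin.cases <;> simp
  have hrow : (fun i : Fin (n + 1) => Function.update (C ∘ z) 0 X (2 * i + 1)) =
      C ∘ fun i : Fin (n + 1) => z (2 * i + 1) := by
    ext1 i
    simp
  have halt (f : ℕ → ℕ) {d : ℕ} (hf : ∀ j : Fin (2 * n + 2), f j < d) :
      alternant f (fun k : Fin (2 * n + 2) => Function.update (C ∘ z) 0 X k) ∈ degreeLT R d := by
    rw [hvar]
    exact alternant_mem_degreeLT f _ hf
  have hfactor : (∏ i ∈ range (n + 1), (C ω - 1) * (-C ω) ^ i) *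
      ∏ i : Fin (n + 1), Function.update (C ∘ z) 0 X (2 * i + 1) =
      C ((∏ i ∈ range (n + 1), (ω - 1) * (-ω) ^ i) * ∏ i : Fin (n + 1), z (2 * i + 1)) := by
    simp only [Function.update_of_ne (Nat.succ_ne_zero _), Function.comp_apply, C_mul, map_prod,
      C_sub, C_1, C_pow, C_neg]
  refine sub_mem ?_ ?_
  · rw [hrow, hcol, show 3 * n + 2 = n + (2 * n + 2) by ring]
    refine mul_mem_degreeLT ?_ (halt id fun j => j.isLt)
    rw [← degreeLT_succ_eq_degreeLE]
    exact partitionFunction_mem_degreeLT ω _ _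
  · rw [hfactor, ← smul_eq_C_mul]
    exact Submodule.smul_mem _ _ (halt gapExp fun j => by unfold gapExp; omega)

theorem eval_schurDefect_update (ω : R) (n : ℕ) (z : ℕ → R) (a : R) :
    (schurDefect (C ω) n (Function.update (C ∘ z) 0 X)).eval a =
      schurDefect ω n (Function.update z 0 a) := by
  rw [← coe_evalRingHom, map_schurDefect, Function.comp_update]
  simp [Function.comp_def]

end Interpolation

section Vanishing

variable {R : Type*} [CommRing R] [IsDomain R] {ω : R}

theorem schurDefect_update_eq_zero (hω : IsPrimitiveRoot ω 3) {n : ℕ} (z : ℕ → R)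
    (i : Fin (n + 1))
    (h : schurDefect ω n (fun k => z (Equiv.swap 1 (2 * i + 1 : ℕ) (k + 2))) = 0) :
    schurDefect ω (n + 1) (Function.update z 0 (ω * z (2 * i + 1))) = 0 := by
  set w := Function.update z 0 (ω * z (2 * i + 1)) ∘ Equiv.swap 1 (2 * i + 1 : ℕ) with hw
  have hswap : schurDefect ω (n + 1) w = _ := schurDefect_comp_swap hω _ 0 i
  have hw0 : w 0 = ω * w 1 := by
    simp [hw, Equiv.swap_apply_of_ne_of_ne]
  have htail : (fun k => w (k + 2)) = fun k => z (Equiv.swap 1 (2 * i + 1 : ℕ) (k + 2)) := by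
    ext k
    refine Function.update_of_ne ?_ _ _
    rw [Equiv.swap_apply_def]
    split_ifs <;> omega
  rw [schurDefect_succ (sq_add_self_add_one_eq_zero_s12 hω) n hw0, htail, h, mul_zero] at hswap
  rcases Int.units_eq_one_or (Equiv.Perm.sign (Equiv.swap 0 i)) with hs | hs <;>
    simpa [hs] using hswap.symm

theorem schurDefect_eq_zero_of_injective (hω : IsPrimitiveRoot ω 3) (n : ℕ) {z : ℕ → R}
    (hz : Function.Injective z) (hωz : ∀ j k, ω * z j ≠ z k) : schurDefect ω n z = 0 := by
  induction n generalizing z with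
  | zero =>
    simp [schurDefect, partitionFunction, alternant, Matrix.one_apply,
      eq_iff_true_of_subsingleton]
  | succ n ih =>
    set D := schurDefect (C ω) (n + 1) (Function.update (C ∘ z) 0 X) with hD
    let roots : Fin (2 * n + 1) ⊕ Fin (n + 1) → R :=
      Sum.elim (fun k => z (k + 1)) fun i => ω * z (2 * i + 1)
    have hinj : Function.Injective roots := by
      refine .sumElim (fun j k h => ?_) (fun j k h => ?_) fun j k => (hωz _ _).symm
      · have := hz h
        omega
      · have := hz (mul_left_cancel₀ (hω.ne_zero three_ne_zero) h)
        omega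
    have hroot (r) : D.eval (roots r) = 0 := by
      rw [hD, eval_schurDefect_update]
      rcases r with k | i
      · exact schurDefect_eq_zero_of_eq ω (i := (0 : Fin (2 * n + 2))) (j := k.succ)
          (Fin.succ_ne_zero k).symm (by simp [roots])
      · refine schurDefect_update_eq_zero hω z i (ih (fun k l h => ?_) fun j k => hωz _ _)
        have := (Equiv.swap 1 (2 * i + 1 : ℕ)).injective (hz h)
        omega
    have hD0 : D = 0 := by
      by_contra hne
      refine hne (eq_zero_of_natDegree_lt_card_of_eval_eq_zero D hinj hroot ?_)
      rw [natDegree_lt_iff_degree_lt hne]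
      have hcard : Fintype.card (Fin (2 * n + 1) ⊕ Fin (n + 1)) = 3 * n + 2 := by
        rw [Fintype.card_sum, Fintype.card_fin, Fintype.card_fin]
        omega
      rw [hcard]
      exact mem_degreeLT.1 (schurDefect_mem_degreeLT ω n z)
    rw [← Function.update_eq_self 0 z, ← eval_schurDefect_update, ← hD, hD0, eval_zero]

/-- For independent indeterminates in place of `z` the roots found above are distinct. -/
theorem schurDefect_eq_zero (hω : IsPrimitiveRoot ω 3) (n : ℕ) (z : ℕ → R) :
    schurDefect ω n z = 0 := by
  have hωX : IsPrimitiveRoot (MvPolynomial.C ω : MvPolynomial ℕ R) 3 :=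
    hω.map_of_injective (MvPolynomial.C_injective ℕ R)
  have hne (j k : ℕ) :
      MvPolynomial.C ω * MvPolynomial.X j ≠ (MvPolynomial.X k : MvPolynomial ℕ R) := fun h =>
    hω.ne_one (by norm_num) (by simpa using congrArg (MvPolynomial.eval 1) h)
  have hgeneric := schurDefect_eq_zero_of_injective hωX n MvPolynomial.X_injective hne
  simpa [map_schurDefect, Function.comp_def] using congrArg (MvPolynomial.eval z) hgeneric

theorem partitionFunction_mul_alternant_id (hω : IsPrimitiveRoot ω 3) (n : ℕ) (z : ℕ → R) :
    partitionFunction ω (fun i : Fin n => z (2 * i + 1)) (fun i : Fin n => z (2 * i)) *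
        alternant id (fun k : Fin (2 * n) => z k) =
      (∏ i ∈ range n, (ω - 1) * (-ω) ^ i) * (∏ i : Fin n, z (2 * i + 1)) *
        alternant gapExp (fun k : Fin (2 * n) => z k) :=
  sub_eq_zero.1 (schurDefect_eq_zero hω n z)

end Vanishing

section Specialization

variable {R : Type*} [CommRing R]

theorem alternant_pow (m : ℕ) (f : ℕ → ℕ) (t : R) :
    alternant f (fun i : Fin m => t ^ (i : ℕ)) =
      (Matrix.vandermonde fun j : Fin m => t ^ f j).det := by
  rw [← Matrix.det_transpose, alternant]
  congr 1
  ext i j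
  simp [Matrix.vandermonde_apply, ← pow_mul, mul_comm]

theorem det_vandermonde_pow (m : ℕ) (f : ℕ → ℕ) (t : R) :
    (Matrix.vandermonde fun j : Fin m => t ^ f j).det =
      (∏ i : Fin m, (t - 1) ^ #(Ioi i)) *
        (Matrix.vandermonde fun j : Fin m => ∑ k ∈ range (f j), t ^ k).det := by
  simp only [Matrix.det_vandermonde, ← prod_const, ← prod_mul_distrib]
  refine prod_congr rfl fun i _ => prod_congr rfl fun j _ => ?_
  linear_combination mul_geom_sum t (f i) - mul_geom_sum t (f j)

theorem eval_one_det_vandermonde_geom_sum (m : ℕ) (f : ℕ → ℕ) :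
    (Matrix.vandermonde fun j : Fin m => ∑ k ∈ range (f j), (X : R[X]) ^ k).det.eval 1 =
      (Matrix.vandermonde fun j : Fin m => (f j : R)).det := by
  simp [Matrix.det_vandermonde, eval_prod, eval_finsetSum]

theorem partitionFunction_one_mul_det_vandermonde [IsDomain R] {ω : R} (hω : IsPrimitiveRoot ω 3)
    (n : ℕ) :
    partitionFunction ω (fun _ : Fin n => 1) (fun _ : Fin n => 1) *
        (Matrix.vandermonde fun j : Fin (2 * n) => (j : R)).det =
      (∏ i ∈ range n, (ω - 1) * (-ω) ^ i) *
        (Matrix.vandermonde fun j : Fin (2 * n) => (gapExp j : R)).det := by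
  have hpow := partitionFunction_mul_alternant_id (hω.map_of_injective (C_injective (R := R))) n
    fun k => X ^ k
  rw [alternant_pow, alternant_pow, det_vandermonde_pow, det_vandermonde_pow, mul_left_comm,
    mul_left_comm _ (∏ i : Fin (2 * n), (X - 1) ^ #(Ioi i))] at hpow
  have hX : ∏ i : Fin (2 * n), ((X : R[X]) - 1) ^ #(Ioi i) ≠ 0 :=
    prod_ne_zero_iff.2 fun i _ => pow_ne_zero _ (X_sub_C_ne_zero 1)
  have hone := congrArg (evalRingHom 1) (mul_left_cancel₀ hX hpow)
  simp only [map_mul, map_partitionFunction, map_prod, coe_evalRingHom,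
    eval_one_det_vandermonde_geom_sum] at hone
  simpa [Function.comp_def] using hone

end Specialization

section Factorials

variable {R : Type*} [CommRing R]

theorem det_vandermonde_succ_last {m : ℕ} (v : Fin (m + 1) → R) :
    (Matrix.vandermonde v).det =
      (Matrix.vandermonde (Fin.init v)).det * ∏ i, (v (Fin.last m) - Fin.init v i) := by
  have hcomm {k : ℕ} (w : Fin k → R) :
      (Matrix.vandermonde w).det = ∏ j, ∏ i ∈ Iio j, (w j - w i) := by
    rw [Matrix.det_vandermonde]
    exact prod_comm' (by simp)
  rw [hcomm, hcomm, Fin.prod_univ_castSucc]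
  simp only [Fin.prod_Iio_castSucc, Fin.Iio_last_eq_map, prod_map, Fin.init]
  rfl

theorem det_vandermonde_natCast_succ (m : ℕ) :
    (Matrix.vandermonde fun j : Fin (m + 1) => (j : R)).det =
      (Matrix.vandermonde fun j : Fin m => (j : R)).det * m.factorial := by
  cases m with
  | zero => simp
  | succ m =>
    rw [Matrix.det_vandermonde_id_eq_superFactorial, Matrix.det_vandermonde_id_eq_superFactorial,
      Nat.superFactorial_succ, Nat.cast_mul, mul_comm]

theorem prod_gapExp_sub_mul_prod_gapExp_sub (n : ℕ) :
    (∏ i ∈ range (2 * n), ((gapExp (2 * n) : R) - gapExp i)) *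
        ∏ i ∈ range (2 * n), ((gapExp (2 * n + 1) : R) - gapExp i) =
      3 ^ n * n.factorial * (3 * n + 1).factorial := by
  induction n with
  | zero => simp
  | succ n ih =>
    have hfactorial : (3 * (n + 1) + 1).factorial =
        (3 * n + 4) * ((3 * n + 3) * ((3 * n + 2) * (3 * n + 1).factorial)) := rfl
    have heven : gapExp (2 * n) = 3 * n := by unfold gapExp; omega
    have hodd : gapExp (2 * n + 1) = 3 * n + 1 := by unfold gapExp; omega
    have hshift (j i : ℕ) : (gapExp (j + 2) - gapExp (i + 2) : R) = gapExp j - gapExp i := by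
      simp only [gapExp_add_two, Nat.cast_add, add_sub_add_right_eq_sub]
    have hprod (j : ℕ) : ∏ i ∈ range (2 * n + 2), ((gapExp (j + 2) : R) - gapExp i) =
        (∏ i ∈ range (2 * n), ((gapExp j : R) - gapExp i)) * (gapExp j + 2) * (gapExp j + 3) := by
      rw [prod_range_succ', prod_range_succ', prod_congr rfl fun i _ => hshift j i,
        gapExp_add_two, show gapExp (0 + 1) = 1 from rfl, show gapExp 0 = 0 from rfl]
      push_cast
      ring
    rw [hfactorial, Nat.factorial_succ, mul_add_one, hprod, add_right_comm, hprod]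
    simp only [heven, hodd] at ih ⊢
    push_cast at ih ⊢
    linear_combination (3 * n + 2) * (3 * n + 3) ^ 2 * (3 * n + 4) * ih

theorem det_vandermonde_gapExp_succ (n : ℕ) :
    (Matrix.vandermonde fun j : Fin (2 * (n + 1)) => (gapExp j : R)).det =
      (Matrix.vandermonde fun j : Fin (2 * n) => (gapExp j : R)).det *
        (3 ^ n * n.factorial * (3 * n + 1).factorial) := by
  have hlast : (gapExp (2 * n + 1) : R) - gapExp (2 * n) = 1 := by
    rw [show gapExp (2 * n + 1) = gapExp (2 * n) + 1 by unfold gapExp; omega]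
    push_cast
    ring
  refine (det_vandermonde_succ_last (m := 2 * n + 1) fun j => (gapExp j : R)).trans ?_
  rw [det_vandermonde_succ_last, Fin.prod_univ_castSucc, ← prod_gapExp_sub_mul_prod_gapExp_sub,
    ← Fin.prod_univ_eq_prod_range, ← Fin.prod_univ_eq_prod_range]
  simp only [Fin.init, Fin.val_castSucc, Fin.val_last, hlast, mul_one, mul_assoc]
  rfl

theorem prod_factorial_succ (n : ℕ) :
    (∏ i ∈ range (n + 1), (n + 1 + i).factorial) * n.factorial =
      (∏ i ∈ range n, (n + i).factorial) * (2 * n).factorial * (2 * n + 1).factorial := by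
  have h := prod_range_succ' (fun i => (n + i).factorial) (n + 1)
  rw [prod_range_succ, prod_range_succ] at h
  simp only [add_zero, ← add_assoc] at h
  simp only [two_mul, h, add_right_comm n 1]

theorem det_vandermonde_gapExp {K : Type*} [Field K] [CharZero K] (n : ℕ) :
    (Matrix.vandermonde fun j : Fin (2 * n) => (gapExp j : K)).det =
      (∏ i ∈ range n, ((3 * i + 1).factorial : K) / (n + i).factorial) *
        (∏ i ∈ range n, 3 ^ i) * (Matrix.vandermonde fun j : Fin (2 * n) => (j : K)).det := by
  induction n with
  | zero => simp
  | succ n ih =>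
    have hid : (Matrix.vandermonde fun j : Fin (2 * (n + 1)) => (j : K)).det =
        (Matrix.vandermonde fun j : Fin (2 * n) => (j : K)).det * (2 * n).factorial *
          (2 * n + 1).factorial := by
      rw [← det_vandermonde_natCast_succ, ← det_vandermonde_natCast_succ]
      rfl
    have hfactorial := congrArg (Nat.cast (R := K)) (prod_factorial_succ n)
    push_cast at hfactorial
    have hne (k m : ℕ) : ∏ i ∈ range k, ((m + i).factorial : K) ≠ 0 :=
      prod_ne_zero_iff.2 fun i _ => Nat.cast_ne_zero.2 (Nat.factorial_ne_zero _)
    have h1 := hne n n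
    have h2 := hne (n + 1) (n + 1)
    rw [det_vandermonde_gapExp_succ, ih, hid, prod_div_distrib, prod_div_distrib,
      prod_range_succ (fun i => ((3 * i + 1).factorial : K)),
      prod_range_succ (fun i => (3 : K) ^ i)]
    field_simp
    linear_combination (∏ i ∈ range n, ((3 * i + 1).factorial : K)) * (∏ i ∈ range n, 3 ^ i) *
      (Matrix.vandermonde fun j : Fin (2 * n) => (j : K)).det * (3 * n + 1).factorial * hfactorial

end Factorials

section AlternatingSignMatrices

/-- The partial sums of `r`, started at `b`, stay in `{0, 1}` and end at `c`; the booleans stand for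
`0` and `1`. Every row and every column of an alternating sign matrix is such a walk. -/
def IsBinaryWalk : (n : ℕ) → Bool → Bool → (Fin n → ℤ) → Prop
  | 0, b, c, _ => b = c
  | n + 1, b, c, r => ∃ d : Bool, (d.toNat : ℤ) = b.toNat + r 0 ∧ IsBinaryWalk n d c (Fin.tail r)

theorem sum_Iic_succ_fin {M : Type*} [AddCommMonoid M] {n : ℕ} (r : Fin (n + 1) → M) (j : Fin n) :
    ∑ i ∈ Iic j.succ, r i = r 0 + ∑ i ∈ Iic j, Fin.tail r i := by
  have hIic : Iic j.succ = cons 0 ((Iic j).map (Fin.succEmb n)) (by simp) := by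
    ext i
    cases i using Fin.cases <;> simp
  rw [hIic, sum_cons, sum_map]
  rfl

theorem isBinaryWalk_iff {n : ℕ} (b c : Bool) (r : Fin n → ℤ) :
    IsBinaryWalk n b c r ↔ b.toNat + ∑ i, r i = c.toNat ∧
      ∀ j, (b.toNat + ∑ i ∈ Iic j, r i = 0 ∨ b.toNat + ∑ i ∈ Iic j, r i = 1) := by
  induction n generalizing b with
  | zero => cases b <;> cases c <;> simp [IsBinaryWalk]
  | succ n ih =>
    have hsum : ∑ i, r i = r 0 + ∑ i, Fin.tail r i := Fin.sum_univ_succ r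
    have hIic : ∑ i ∈ Iic (0 : Fin (n + 1)), r i = r 0 :=
      (congrArg (fun s => ∑ i ∈ s, r i) Iic_bot).trans (sum_singleton r 0)
    simp only [IsBinaryWalk, Fin.forall_fin_succ (n := n), hIic, sum_Iic_succ_fin, hsum, ih,
      ← add_assoc]
    constructor
    · rintro ⟨d, hd, hend, hpartial⟩
      rw [← hd]
      exact ⟨hend, by cases d <;> simp, hpartial⟩
    · rintro ⟨hend, hfirst, hpartial⟩
      obtain ⟨d, hd⟩ : ∃ d : Bool, (d.toNat : ℤ) = b.toNat + r 0 :=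
        hfirst.elim (fun h => ⟨false, h.symm⟩) fun h => ⟨true, h.symm⟩
      rw [← hd] at hend hpartial
      exact ⟨d, hd, hend, hpartial⟩

theorem IsBinaryWalk.eq_neg_one_or_zero_or_one {n : ℕ} {b c : Bool} {r : Fin n → ℤ}
    (h : IsBinaryWalk n b c r) (j : Fin n) : r j = -1 ∨ r j = 0 ∨ r j = 1 := by
  induction n generalizing b with
  | zero => exact j.elim0
  | succ n ih =>
    obtain ⟨d, hd, htail⟩ := h
    cases j using Fin.cases with
    | zero =>
      have hb := b.toNat_le
      have hd' := d.toNat_le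
      omega
    | succ j => exact ih htail j

theorem isASM_iff {n : ℕ} (A : Matrix (Fin n) (Fin n) ℤ) :
    IsASM A ↔ (∀ i, IsBinaryWalk n false true (A i)) ∧
      ∀ j, IsBinaryWalk n false true fun i => A i j := by
  constructor
  · rintro ⟨-, hrow, hcol, hrow', hcol'⟩
    simp only [isBinaryWalk_iff, Bool.toNat_false, Bool.toNat_true, Nat.cast_zero, Nat.cast_one,
      zero_add]
    exact ⟨fun i => ⟨hrow i, hrow' i⟩, fun j => ⟨hcol j, fun i => hcol' i j⟩⟩
  · rintro ⟨hrow, hcol⟩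
    refine ⟨fun i j => (hrow i).eq_neg_one_or_zero_or_one j, ?_⟩
    simp only [isBinaryWalk_iff, Bool.toNat_false, Bool.toNat_true, Nat.cast_zero, Nat.cast_one,
      zero_add] at hrow hcol
    exact ⟨fun i => (hrow i).1, fun j => (hcol j).1, fun i => (hrow i).2,
      fun i j => (hcol j).2 i⟩

theorem mem_asmFinset {n : ℕ} (A : Matrix (Fin n) (Fin n) ℤ) : A ∈ asmFinset n ↔ IsASM A := by
  simp only [asmFinset, mem_filter, and_iff_right_iff_imp]
  intro hA
  have hentry (i j : Fin n) : ∃ b : Fin 3, ((b : ℕ) : ℤ) - 1 = A i j := by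
    rcases hA.1 i j with h | h | h <;> rw [h]
    exacts [⟨0, rfl⟩, ⟨1, rfl⟩, ⟨2, rfl⟩]
  choose B hB using hentry
  exact mem_image.2 ⟨B, mem_univ _, Matrix.ext hB⟩

/-- The row of the alternating sign matrix which takes the vector `s` of partial column sums to the
vector `t`. -/
def stateDiff {n : ℕ} (s t : Fin n → Bool) (j : Fin n) : ℤ := (t j).toNat - (s j).toNat

theorem stateDiff_injective {n : ℕ} (s : Fin n → Bool) : Function.Injective (stateDiff s) := by
  intro u v h
  ext1 j
  have hj : ((u j).toNat : ℤ) - (s j).toNat = (v j).toNat - (s j).toNat := congrFun h j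
  rw [Bool.eq_iff_iff, ← Bool.toNat_eq_one, ← Bool.toNat_eq_one]
  omega

open scoped Classical in
/-- The `m × n` arrays whose rows are binary walks from `0` to `1` and whose columns are binary
walks from `s` to `t`, built row by row. -/
def walkArrays (n : ℕ) : (m : ℕ) → (Fin n → Bool) → (Fin n → Bool) → Finset (Fin m → Fin n → ℤ)
  | 0, s, t => if s = t then {Fin.elim0} else ∅
  | m + 1, s, t => (univ.filter fun u => IsBinaryWalk n false true (stateDiff s u)).biUnion
      fun u => (walkArrays n m u t).image (Fin.cons (stateDiff s u))

theorem mem_walkArrays {n m : ℕ} (s t : Fin n → Bool) (A : Fin m → Fin n → ℤ) :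
    A ∈ walkArrays n m s t ↔ (∀ i, IsBinaryWalk n false true (A i)) ∧
      ∀ j, IsBinaryWalk m (s j) (t j) fun i => A i j := by
  induction m generalizing s with
  | zero =>
    rw [walkArrays]
    simp only [IsBinaryWalk, IsEmpty.forall_iff, true_and, ← funext_iff]
    split_ifs with h <;> simp [h, Subsingleton.elim A Fin.elim0]
  | succ m ih =>
    simp only [walkArrays, mem_biUnion, mem_filter, mem_univ, true_and, mem_image, ih,
      IsBinaryWalk, Fin.forall_fin_succ (P := fun i => IsBinaryWalk n false true (A i))]
    constructor
    · rintro ⟨u, hu, A', ⟨hrow, hcol⟩, rfl⟩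
      exact ⟨⟨hu, hrow⟩, fun j => ⟨u j, by simp [stateDiff], hcol j⟩⟩
    · rintro ⟨⟨hrow₀, hrow⟩, hcol⟩
      choose u hu hcol using hcol
      have hdiff : stateDiff s u = A 0 := funext fun j => by simp [stateDiff, hu]
      exact ⟨u, by rwa [hdiff], Fin.tail A, ⟨hrow, hcol⟩, by rw [hdiff, Fin.cons_self_tail]⟩

theorem card_asmFinset (n : ℕ) :
    #(asmFinset n) = #(walkArrays n n (fun _ => false) fun _ => true) := by
  congr 1
  ext A
  exact (mem_asmFinset A).trans ((isASM_iff A).trans (mem_walkArrays _ _ A).symm)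

open scoped Classical in
theorem card_walkArrays_succ (n m : ℕ) (s t : Fin n → Bool) :
    #(walkArrays n (m + 1) s t) =
      ∑ u, if IsBinaryWalk n false true (stateDiff s u) then #(walkArrays n m u t) else 0 := by
  rw [walkArrays, card_biUnion, sum_filter]
  · exact sum_congr rfl fun u _ => by
      rw [card_image_of_injective _ (Fin.cons_right_injective _)]
  · intro u _ v _ huv
    rw [Function.onFun, disjoint_left]
    intro A hu hv
    obtain ⟨B, -, rfl⟩ := mem_image.1 hu
    obtain ⟨B', -, h⟩ := mem_image.1 hv
    exact huv (stateDiff_injective s (congrFun h 0).symm)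

end AlternatingSignMatrices

section HomogeneousModel

variable {R : Type*} [CommRing R] (ω : R)

theorem vertexWeight_one (h v h' v' : Bool) :
    vertexWeight ω 1 1 h v h' v' =
      if (h'.toNat : ℤ) = h.toNat + (v'.toNat - v.toNat) then ω - 1 else 0 := by
  cases h <;> cases v <;> cases h' <;> cases v' <;> simp [vertexWeight]

open scoped Classical in
theorem monodromyMatrix_one (n : ℕ) (s t : Fin n → Bool) (h h' : Bool) :
    monodromyMatrix ω 1 (fun _ => 1) s t h h' =
      if IsBinaryWalk n h h' (stateDiff s t) then (ω - 1) ^ n else 0 := by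
  induction n generalizing h with
  | zero => simp [monodromyMatrix, Matrix.one_apply, IsBinaryWalk]
  | succ n ih =>
    have htail : Fin.tail (stateDiff s t) = stateDiff (Fin.tail s) (Fin.tail t) := rfl
    have hone : Fin.tail (fun _ : Fin (n + 1) => (1 : R)) = fun _ => 1 := rfl
    simp only [monodromyMatrix_succ, Matrix.mul_apply, vertexMatrix, Matrix.of_apply, hone, ih,
      vertexWeight_one, IsBinaryWalk, htail, Fintype.sum_bool]
    rw [stateDiff]
    cases h <;> cases s 0 <;> cases t 0 <;> simp [pow_succ']

theorem transferMatrix_one_pow (n m : ℕ) (s t : Fin n → Bool) :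
    (transferMatrix ω (fun _ => 1) 1 ^ m) s t = (ω - 1) ^ (m * n) * #(walkArrays n m s t) := by
  classical
  induction m generalizing s with
  | zero =>
    rw [pow_zero, Matrix.one_apply, walkArrays]
    split_ifs <;> simp
  | succ m ih =>
    rw [pow_succ', Matrix.mul_apply, card_walkArrays_succ, Nat.cast_sum, mul_sum]
    refine sum_congr rfl fun u _ => ?_
    rw [ih, transferMatrix, Matrix.of_apply, monodromyMatrix_one]
    split_ifs
    · ring
    · simp

theorem partitionFunction_one (n : ℕ) :
    partitionFunction ω (fun _ : Fin n => 1) (fun _ : Fin n => 1) =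
      (ω - 1) ^ (n * n) * #(asmFinset n) := by
  rw [partitionFunction, List.ofFn_const, List.map_replicate, List.prod_replicate,
    transferMatrix_one_pow, card_asmFinset]

variable {ω}

theorem prod_mul_neg_pow_mul_prod_three_pow (hω : ω ^ 2 + ω + 1 = 0) (n : ℕ) :
    (∏ i ∈ range n, (ω - 1) * (-ω) ^ i) * ∏ i ∈ range n, (3 : R) ^ i = (ω - 1) ^ (n * n) := by
  have hsq : -ω * 3 = (ω - 1) ^ 2 := by linear_combination -hω
  rw [← prod_mul_distrib]
  calc
    _ = ∏ i ∈ range n, (ω - 1) ^ (2 * i + 1) := prod_congr rfl fun i _ => by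
      rw [mul_assoc, ← mul_pow, hsq, ← pow_mul, ← pow_succ']
    _ = _ := by
      rw [prod_pow_eq_pow_sum]
      congr 1
      induction n with
      | zero => rfl
      | succ n ih => rw [sum_range_succ, ih]; ring

theorem card_asmFinset_mul_det_vandermonde [IsDomain R] (hω : IsPrimitiveRoot ω 3) (n : ℕ) :
    #(asmFinset n) * (∏ i ∈ range n, (3 : R) ^ i) *
        (Matrix.vandermonde fun j : Fin (2 * n) => (j : R)).det =
      (Matrix.vandermonde fun j : Fin (2 * n) => (gapExp j : R)).det := by
  have hZ := partitionFunction_one_mul_det_vandermonde hω n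
  rw [partitionFunction_one] at hZ
  have hfactor := prod_mul_neg_pow_mul_prod_three_pow (sq_add_self_add_one_eq_zero_s12 hω) n
  refine mul_left_cancel₀ (pow_ne_zero (n * n) (sub_ne_zero.2 (hω.ne_one (by norm_num)))) ?_
  linear_combination (∏ i ∈ range n, (3 : R) ^ i) * hZ +
    (Matrix.vandermonde fun j : Fin (2 * n) => (gapExp j : R)).det * hfactor

end HomogeneousModel

/-- the number of alternating sign matrices of size n is
∏_{i=0}^{n-1}(3i+1)!/(n+i)!. -/
theorem statement12 (n : ℕ) :
    ((asmFinset n).card : ℚ) =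
      ∏ i ∈ Finset.range n, ((3 * i + 1).factorial : ℚ) / ((n + i).factorial : ℚ) := by
  have hcount := card_asmFinset_mul_det_vandermonde (Complex.isPrimitiveRoot_exp 3 three_ne_zero) n
  rw [det_vandermonde_gapExp] at hcount
  have hdet : (Matrix.vandermonde fun j : Fin (2 * n) => (j : ℂ)).det ≠ 0 :=
    Matrix.det_vandermonde_ne_zero_iff.2 (Nat.cast_injective.comp Fin.val_injective)
  have hpow : ∏ i ∈ range n, (3 : ℂ) ^ i ≠ 0 :=
    prod_ne_zero_iff.2 fun i _ => pow_ne_zero i three_ne_zero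
  apply Rat.cast_injective (α := ℂ)
  push_cast
  exact mul_right_cancel₀ hpow (mul_right_cancel₀ hdet hcount)

end
end
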